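/- arXiv:math/0611901 — 2 statements merged into one kernel-verified Lean document; each statement's English description precedes it below -/
import Mathlib

section
/- Let n ≥ 1, n/(n+1) < p ≤ 1, and let Ω ⊆ ℝⁿ be a domain (nonempty open connected proper subset). There is a constant C = C(n,p) ≥ 1 such that for every locally integrable f : Ω → ℝ the following hold, where 𝔐_Ω f(x) := max_{1≤j≤n} sup { |∫_Ω f ∂_j φ dm| : 0 < r' ≤ dist(x,∂Ω)/2, φ ∈ A_1(B(x,r')) } for x ∈ Ω: (i) if g ∈ L^p(Ω) is a ball-Hajlasz gradient of f on Ω, then ‖𝔐_Ω f‖_{L^p(Ω)} ≤ C ‖g‖_{L^p(Ω)}; (ii) if 𝔐_Ω f ∈ L^p(Ω), then C·𝔐_Ω f is a ball-Hajlasz gradient of f on Ω. In particular the Hardy–Sobolev space H^{1,p}(Ω) equals M^{1,p}_{ball}(Ω) with equivalent quasinorms. -/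
open MeasureTheory Metric Set ENNReal NNReal

noncomputable section

/-- The partial derivative `∂_j φ` in the `j`-th coordinate direction. -/
def pderivIdx (n : ℕ) (j : Fin n) (φ : EuclideanSpace ℝ (Fin n) → ℝ)
    (x : EuclideanSpace ℝ (Fin n)) : ℝ :=
  fderiv ℝ φ x (EuclideanSpace.single j 1)

/-- The `L^p` quasinorm (for a positive real exponent `p`) of a real function
with respect to the measure `μ`. -/
def lpNorm (n : ℕ) (p : ℝ) (g : EuclideanSpace ℝ (Fin n) → ℝ)
    (μ : Measure (EuclideanSpace ℝ (Fin n))) : ℝ≥0∞ :=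
  (∫⁻ x, ENNReal.ofReal |g x| ^ p ∂μ) ^ (1 / p)

/-- `g` is a ball-Hajlasz gradient of `u` on the domain `Ω`: the Hajlasz inequality is
required only for a.e. pairs of points `x, y ∈ Ω` with
`‖x - y‖ ≤ (1/4) min (dist(x,∂Ω), dist(y,∂Ω))`. -/
def IsBallHajlaszGradientOn (n : ℕ) (u g : EuclideanSpace ℝ (Fin n) → ℝ)
    (Ω : Set (EuclideanSpace ℝ (Fin n))) : Prop :=
  Measurable g ∧ (∀ x, 0 ≤ g x) ∧
    ∃ E : Set (EuclideanSpace ℝ (Fin n)), MeasureTheory.volume E = 0 ∧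
      ∀ x ∈ Ω \ E, ∀ y ∈ Ω \ E,
        ‖x - y‖ ≤ (1 / 4) * min (infDist x (frontier Ω)) (infDist y (frontier Ω)) →
        |u x - u y| ≤ ‖x - y‖ * (g x + g y)

/-- The class `A_1(B(z,r'))` of smooth test functions supported in `B(z,r')` with
`|φ| ≤ r'^{-n}` and `|∂_j φ| ≤ r'^{-n-1}` for each `j`. -/
def memTestClassOne (n : ℕ) (z : EuclideanSpace ℝ (Fin n)) (r' : ℝ)
    (φ : EuclideanSpace ℝ (Fin n) → ℝ) : Prop :=
  ContDiff ℝ (⊤ : ℕ∞) φ ∧ tsupport φ ⊆ ball z r' ∧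
    (∀ x, |φ x| ≤ (r'⁻¹) ^ n) ∧ ∀ (j : Fin n) (x), |pderivIdx n j φ x| ≤ (r'⁻¹) ^ (n + 1)

/-- Miyachi's grand maximal function (of order `1`) of the gradient of `f` on `Ω`:
`𝔐_Ω f(x) = max_j sup { |∫_Ω f ∂_j φ| : 0 < r' ≤ dist(x,∂Ω)/2, φ ∈ A_1(B(x,r')) }`. -/
def miyachiMax (n : ℕ) (Ω : Set (EuclideanSpace ℝ (Fin n)))
    (f : EuclideanSpace ℝ (Fin n) → ℝ) (x : EuclideanSpace ℝ (Fin n)) : ℝ≥0∞ :=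
  ⨆ j : Fin n, ⨆ (r' : {s : ℝ // 0 < s ∧ s ≤ infDist x (frontier Ω) / 2}),
    ⨆ (φ : {φ : EuclideanSpace ℝ (Fin n) → ℝ // memTestClassOne n x r'.1 φ}),
      ENNReal.ofReal |∫ y in Ω, f y * pderivIdx n j φ.1 y|


/-- Hardy-Littlewood maximal function. -/
def hlMax (n : ℕ) (h : EuclideanSpace ℝ (Fin n) → ℝ≥0∞) (x : EuclideanSpace ℝ (Fin n)) : ℝ≥0∞ :=
  ⨆ (r : ℝ) (_ : 0 < r), (volume (ball x r))⁻¹ * ∫⁻ z in ball x r, h z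

lemma vol_ball (n : ℕ) (x : EuclideanSpace ℝ (Fin n)) {r : ℝ} (hr : 0 < r) :
    volume (ball x r) = ENNReal.ofReal r ^ n * volume (ball (0 : EuclideanSpace ℝ (Fin n)) 1) := by
  rw [Measure.addHaar_ball_of_pos volume x hr, finrank_euclideanSpace_fin,
    ENNReal.ofReal_pow hr.le]

lemma vol_ball_ne_zero (n : ℕ) (x : EuclideanSpace ℝ (Fin n)) {r : ℝ} (hr : 0 < r) :
    volume (ball x r) ≠ 0 := (measure_ball_pos volume x hr).ne'

lemma vol_ball_ne_top (n : ℕ) (x : EuclideanSpace ℝ (Fin n)) (r : ℝ) :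
    volume (ball x r) ≠ ⊤ := measure_ball_lt_top.ne

lemma isOpen_hlMax (n : ℕ) (h : EuclideanSpace ℝ (Fin n) → ℝ≥0∞) (t : ℝ≥0∞) :
    IsOpen {x | t < hlMax n h x} := by
  rw [Metric.isOpen_iff]
  intro x hx
  simp only [mem_ofPred_eq, hlMax, lt_iSup_iff] at hx
  obtain ⟨r, hr, hx⟩ := hx
  -- continuity from below
  have key : ∃ k : ℕ, t < (volume (ball x r))⁻¹ * ∫⁻ z in ball x (r - 1 / (k + 1)), h z := by
    have hU : ball x r = ⋃ k : ℕ, ball x (r - 1 / ((k : ℝ) + 1)) := by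
      ext z
      simp only [mem_ball, mem_iUnion]
      constructor
      · intro hz
        obtain ⟨k, hk⟩ := exists_nat_one_div_lt (sub_pos.2 hz)
        exact ⟨k, by linarith⟩
      · rintro ⟨k, hk⟩
        have : (0 : ℝ) < 1 / ((k : ℝ) + 1) := by positivity
        linarith
    have hmono : Monotone fun k : ℕ => ball x (r - 1 / ((k : ℝ) + 1)) := by
      intro a b hab
      apply ball_subset_ball
      have : 1 / ((b : ℝ) + 1) ≤ 1 / ((a : ℝ) + 1) := by
        apply one_div_le_one_div_of_le (by positivity)
        have : (a : ℝ) ≤ b := by exact_mod_cast hab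
        linarith
      linarith
    have e : ∫⁻ z in ball x r, h z = ⨆ k : ℕ, ∫⁻ z in ball x (r - 1 / ((k : ℝ) + 1)), h z := by
      rw [hU]
      exact setLIntegral_iUnion_of_directed _ hmono.directed_le
    rw [e, ENNReal.mul_iSup] at hx
    exact lt_iSup_iff.1 hx
  obtain ⟨k, hk⟩ := key
  refine ⟨1 / (k + 1), by positivity, fun y hy => ?_⟩
  simp only [mem_ofPred_eq, hlMax, lt_iSup_iff]
  refine ⟨r, hr, hk.trans_le ?_⟩
  rw [vol_ball n x hr, vol_ball n y hr]
  gcongr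
  intro z hz
  rw [mem_ball] at *
  have := dist_triangle z x y
  rw [dist_comm x y] at this
  linarith

lemma measurable_hlMax (n : ℕ) (h : EuclideanSpace ℝ (Fin n) → ℝ≥0∞) :
    Measurable (hlMax n h) :=
  measurable_of_Ioi fun t => (isOpen_hlMax n h t).measurableSet

lemma hlMax_weak (n : ℕ) (hn : 1 ≤ n) (h : EuclideanSpace ℝ (Fin n) → ℝ≥0∞)
    (t : ℝ≥0∞) (ht : t ≠ 0) (ht' : t ≠ ⊤) :
    volume {x | t < hlMax n h x} ≤ 5 ^ n * t⁻¹ * ∫⁻ z, h z := by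
  by_cases hI : ∫⁻ z, h z = ⊤
  · rw [hI, ENNReal.mul_top]
    · exact le_top
    · simp [ht']
  have H : ∀ x ∈ {x | t < hlMax n h x}, ∃ r : ℝ, 0 < r ∧
      t * volume (ball x r) ≤ ∫⁻ z in ball x r, h z := by
    intro x hx
    simp only [mem_ofPred_eq, hlMax, lt_iSup_iff] at hx
    obtain ⟨r, hr, hx⟩ := hx
    refine ⟨r, hr, ?_⟩
    have := hx.le
    rw [mul_comm, ← div_eq_mul_inv, ENNReal.le_div_iff_mul_le (Or.inl (vol_ball_ne_zero n x hr))
      (Or.inl (vol_ball_ne_top n x r))] at this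
    exact this
  choose! r hr hrt using H
  have hv0 : volume (ball (0 : EuclideanSpace ℝ (Fin n)) 1) ≠ 0 := vol_ball_ne_zero n 0 one_pos
  have hvt : volume (ball (0 : EuclideanSpace ℝ (Fin n)) 1) ≠ ⊤ := vol_ball_ne_top n 0 1
  set v := volume (ball (0 : EuclideanSpace ℝ (Fin n)) 1) with hv
  have hRne : ∫⁻ z, h z ≠ ⊤ := hI
  set R : ℝ := max 1 ((t⁻¹ * v⁻¹ * ∫⁻ z, h z).toReal) with hR
  have hbd : ∀ x ∈ {x | t < hlMax n h x}, r x ≤ R := by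
    intro x hx
    by_contra! hlt
    have h1 : 1 < r x := lt_of_le_of_lt (le_max_left _ _) hlt
    have h2 : (t⁻¹ * v⁻¹ * ∫⁻ z, h z).toReal < r x := lt_of_le_of_lt (le_max_right _ _) hlt
    have h3 : r x ≤ r x ^ n := le_self_pow₀ h1.le (by omega)
    have h4 : t⁻¹ * v⁻¹ * ∫⁻ z, h z < ENNReal.ofReal (r x ^ n) := by
      rw [ENNReal.lt_ofReal_iff_toReal_lt]
      · linarith
      · exact ENNReal.mul_ne_top (ENNReal.mul_ne_top (by simp [ht]) (by simp [hv0])) hI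
    have h5 := (hrt x hx).trans (setLIntegral_le_lintegral _ _)
    rw [vol_ball n x (hr x hx), ← ENNReal.ofReal_pow (hr x hx).le] at h5
    have h6 : ENNReal.ofReal (r x ^ n) ≤ t⁻¹ * v⁻¹ * ∫⁻ z, h z := by
      calc ENNReal.ofReal (r x ^ n) = (t⁻¹ * t) * (v⁻¹ * v) * ENNReal.ofReal (r x ^ n) := by
            rw [ENNReal.inv_mul_cancel ht ht', ENNReal.inv_mul_cancel hv0 hvt]; simp
        _ = t⁻¹ * v⁻¹ * (t * (ENNReal.ofReal (r x ^ n) * v)) := by ring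
        _ ≤ _ := by gcongr
    exact absurd h4 (not_lt.2 h6)
  obtain ⟨u, hu, hdisj, hcov⟩ := Vitali.exists_disjoint_subfamily_covering_enlargement_closedBall
    {x | t < hlMax n h x} (fun x => x) r R hbd 5 (by norm_num)
  have huc : u.Countable := by
    apply hdisj.countable_of_nonempty_interior
    intro x hx
    exact ⟨x, ball_subset_interior_closedBall (mem_ball_self (hr x (hu hx)))⟩
  have hsub : {x | t < hlMax n h x} ⊆ ⋃ b ∈ u, closedBall b (5 * r b) := by
    intro x hx
    obtain ⟨b, hb, hxb⟩ := hcov x hx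
    exact mem_biUnion hb (hxb (mem_closedBall_self (hr x hx).le))
  calc volume {x | t < hlMax n h x} ≤ volume (⋃ b ∈ u, closedBall b (5 * r b)) := measure_mono hsub
    _ ≤ ∑' b : u, volume (closedBall (b : EuclideanSpace ℝ (Fin n)) (5 * r b)) :=
        measure_biUnion_le _ huc _
    _ ≤ ∑' b : u, 5 ^ n * t⁻¹ * ∫⁻ z in ball (b : EuclideanSpace ℝ (Fin n)) (r b), h z := by
        refine ENNReal.tsum_le_tsum fun b => ?_
        have hb := hr b (hu b.2)
        have h5 := hrt b (hu b.2)
        have : Nonempty (Fin n) := ⟨⟨0, by omega⟩⟩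
        rw [Measure.addHaar_closedBall_eq_addHaar_ball, vol_ball n _ (by positivity),
          ENNReal.ofReal_mul (by norm_num), mul_pow]
        calc ENNReal.ofReal 5 ^ n * ENNReal.ofReal (r b) ^ n * v
            = 5 ^ n * (t⁻¹ * t) * (ENNReal.ofReal (r b) ^ n * v) := by
              rw [ENNReal.inv_mul_cancel ht ht']; simp; ring
          _ = 5 ^ n * t⁻¹ * (t * volume (ball (b : EuclideanSpace ℝ (Fin n)) (r b))) := by
              rw [vol_ball n _ hb]; ring
          _ ≤ _ := by gcongr
    _ = 5 ^ n * t⁻¹ * ∑' b : u, ∫⁻ z in ball (b : EuclideanSpace ℝ (Fin n)) (r b), h z :=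
        ENNReal.tsum_mul_left
    _ = 5 ^ n * t⁻¹ * ∫⁻ z in ⋃ b ∈ u, ball b (r b), h z := by
        rw [lintegral_biUnion huc (fun _ _ => measurableSet_ball)]
        exact hdisj.mono fun b => ball_subset_closedBall
    _ ≤ _ := by
        gcongr
        exact Measure.restrict_le_self

lemma hlMax_weak' (n : ℕ) (hn : 1 ≤ n) (h : EuclideanSpace ℝ (Fin n) → ℝ≥0∞) (hm : Measurable h)
    (t : ℝ≥0∞) (ht : t ≠ 0) (ht' : t ≠ ⊤) :
    volume {x | t < hlMax n h x} ≤ 5 ^ n * (t / 2)⁻¹ * ∫⁻ z in {z | t < 2 * h z}, h z := by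
  have hS : MeasurableSet {z | t < 2 * h z} := measurableSet_lt measurable_const (hm.const_mul 2)
  rw [← lintegral_indicator hS]
  refine le_trans (measure_mono ?_) (hlMax_weak n hn _ (t / 2) (by simp [ht]) 
    (ENNReal.div_ne_top ht' (by simp)))
  intro x hx
  simp only [mem_ofPred_eq, hlMax, lt_iSup_iff] at hx ⊢
  obtain ⟨r, hr, hx⟩ := hx
  refine ⟨r, hr, ?_⟩
  have h1 : ∫⁻ z in ball x r, h z ≤
      (∫⁻ z in ball x r, {z | t < 2 * h z}.indicator h z) + t / 2 * volume (ball x r) := by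
    rw [← setLIntegral_const, ← lintegral_add_right _ measurable_const]
    apply lintegral_mono
    intro z
    by_cases hz : t < 2 * h z
    · simp [indicator, hz]
    · simp only [indicator, mem_ofPred_eq, hz, if_false, zero_add]
      rw [ENNReal.le_div_iff_mul_le (by simp) (by simp), mul_comm]
      exact not_lt.1 hz
  have h2 : t < (volume (ball x r))⁻¹ * (∫⁻ z in ball x r, {z | t < 2 * h z}.indicator h z)
      + t / 2 := by
    refine hx.trans_le ?_
    calc _ ≤ (volume (ball x r))⁻¹ * ((∫⁻ z in ball x r, {z | t < 2 * h z}.indicator h z)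
            + t / 2 * volume (ball x r)) := by gcongr
      _ = (volume (ball x r))⁻¹ * (∫⁻ z in ball x r, {z | t < 2 * h z}.indicator h z)
        + t / 2 * ((volume (ball x r))⁻¹ * volume (ball x r)) := by ring
      _ = _ := by
        rw [ENNReal.inv_mul_cancel (vol_ball_ne_zero n x hr) (vol_ball_ne_top n x r), mul_one]
  by_contra! hle
  have : t < t / 2 + t / 2 := h2.trans_le (by gcongr)
  rw [ENNReal.add_halves] at this
  exact lt_irrefl _ this

lemma layer_real (q : ℝ) (hq : 0 < q) (a : ℝ≥0∞) (ha : a ≠ ⊤) :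
    ENNReal.ofReal q * ∫⁻ t in Ioi (0 : ℝ),
      {t : ℝ | ENNReal.ofReal t < a}.indicator (fun t => ENNReal.ofReal (t ^ (q - 1))) t = a ^ q := by
  have h := lintegral_rpow_eq_lintegral_meas_lt_mul (Measure.dirac ()) (f := fun _ => a.toReal)
    (by filter_upwards with x using ENNReal.toReal_nonneg) (by fun_prop) hq
  rw [lintegral_dirac, ← ENNReal.ofReal_rpow_of_nonneg ENNReal.toReal_nonneg hq.le,
    ENNReal.ofReal_toReal ha] at h
  rw [h]
  congr 1
  apply setLIntegral_congr_fun measurableSet_Ioi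
  intro t ht
  have ht' : 0 ≤ t := le_of_lt ht
  have : ENNReal.ofReal t < a ↔ t < a.toReal := by
    rw [ENNReal.ofReal_lt_iff_lt_toReal ht' ha]
  by_cases h1 : t < a.toReal
  · simp [indicator, this, h1]
  · simp [indicator, this, h1]

lemma layer_top (q : ℝ) (hq : 0 < q) (a : ℝ≥0∞) :
    a ^ q = ENNReal.ofReal q * ∫⁻ t in Ioi (0 : ℝ),
      {t : ℝ | ENNReal.ofReal t < a}.indicator (fun t => ENNReal.ofReal (t ^ (q - 1))) t := by
  by_cases ha : a = ⊤
  · subst ha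
    rw [ENNReal.top_rpow_of_pos hq]
    symm
    refine ENNReal.eq_top_of_forall_nnreal_le fun b => ?_
    have := layer_real q hq ((b : ℝ≥0∞) ^ (1 / q))
      (ENNReal.rpow_ne_top_of_nonneg (by positivity) (by simp))
    rw [← ENNReal.rpow_mul, one_div_mul_cancel hq.ne', ENNReal.rpow_one] at this
    rw [← this]
    gcongr with t
    exact le_top
  · exact (layer_real q hq a ha).symm

lemma hlMax_strong (n : ℕ) (hn : 1 ≤ n) (q : ℝ) (hq : 1 < q) :
    ∃ A : ℝ≥0∞, A ≠ ⊤ ∧ ∀ h : EuclideanSpace ℝ (Fin n) → ℝ≥0∞, Measurable h →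
      ∫⁻ x, hlMax n h x ^ q ≤ A * ∫⁻ x, h x ^ q := by
  refine ⟨ENNReal.ofReal q * (5 ^ n * 2) * ((ENNReal.ofReal (q - 1))⁻¹ * 2 ^ (q - 1)), ?_, ?_⟩
  · refine ENNReal.mul_ne_top (ENNReal.mul_ne_top (by simp) (ENNReal.mul_ne_top (by simp) (by simp)))
      (ENNReal.mul_ne_top (by simp [hq]) (ENNReal.rpow_ne_top_of_nonneg (by linarith) (by simp)))
  intro h hm
  have hM := measurable_hlMax n h
  have hq0 : 0 < q := by linarith
  have hq1 : 0 < q - 1 := by linarith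
  calc ∫⁻ x, hlMax n h x ^ q
      = ∫⁻ x, ENNReal.ofReal q * ∫⁻ t in Ioi (0 : ℝ),
        {t : ℝ | ENNReal.ofReal t < hlMax n h x}.indicator
          (fun t => ENNReal.ofReal (t ^ (q - 1))) t := by
        congr 1; ext x; exact layer_top q hq0 _
    _ = ENNReal.ofReal q * ∫⁻ x, ∫⁻ t in Ioi (0 : ℝ),
        {t : ℝ | ENNReal.ofReal t < hlMax n h x}.indicator
          (fun t => ENNReal.ofReal (t ^ (q - 1))) t := by
        rw [lintegral_const_mul' _ _ (by simp)]
    _ = ENNReal.ofReal q * ∫⁻ t in Ioi (0 : ℝ), ∫⁻ x,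
        {t : ℝ | ENNReal.ofReal t < hlMax n h x}.indicator
          (fun t => ENNReal.ofReal (t ^ (q - 1))) t := by
        rw [lintegral_lintegral_swap]
        apply Measurable.aemeasurable
        have : MeasurableSet {z : EuclideanSpace ℝ (Fin n) × ℝ | ENNReal.ofReal z.2 < hlMax n h z.1} :=
          measurableSet_lt (by fun_prop) (by fun_prop)
        exact Measurable.indicator (f := fun z : EuclideanSpace ℝ (Fin n) × ℝ =>
          ENNReal.ofReal (z.2 ^ (q - 1))) (by fun_prop) this
    _ = ENNReal.ofReal q * ∫⁻ t in Ioi (0 : ℝ), 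
          ENNReal.ofReal (t ^ (q - 1)) * volume {x | ENNReal.ofReal t < hlMax n h x} := by
        congr 1
        apply lintegral_congr
        intro t
        rw [← setLIntegral_const, ← lintegral_indicator (isOpen_hlMax n h _).measurableSet]
        rfl
    _ ≤ ENNReal.ofReal q * ∫⁻ t in Ioi (0 : ℝ), (5 ^ n * 2) * (ENNReal.ofReal (t ^ (q - 1 - 1)) *
          ∫⁻ z in {z | ENNReal.ofReal t < 2 * h z}, h z) := by
        gcongr ENNReal.ofReal q * ?_
        apply setLIntegral_mono' measurableSet_Ioi
        intro t ht
        have ht0 : 0 < t := ht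
        have := hlMax_weak' n hn h hm (ENNReal.ofReal t) (by simp [ht0]) (by simp)
        calc _ ≤ ENNReal.ofReal (t ^ (q - 1)) * (5 ^ n * (ENNReal.ofReal t / 2)⁻¹ *
              ∫⁻ z in {z | ENNReal.ofReal t < 2 * h z}, h z) := by gcongr
          _ = _ := by
            rw [ENNReal.inv_div (by simp) (by simp), Real.rpow_sub_one ht0.ne' (q - 1),
              ENNReal.ofReal_div_of_pos ht0, div_eq_mul_inv, div_eq_mul_inv]
            ring
    _ = ENNReal.ofReal q * (5 ^ n * 2) * ∫⁻ t in Ioi (0 : ℝ), (ENNReal.ofReal (t ^ (q - 1 - 1)) *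
          ∫⁻ z in {z | ENNReal.ofReal t < 2 * h z}, h z) := by
        rw [lintegral_const_mul' _ _ (ENNReal.mul_ne_top (by simp) (by simp))]; ring
    _ = ENNReal.ofReal q * (5 ^ n * 2) * ∫⁻ t in Ioi (0 : ℝ), ∫⁻ z, h z *
          {t : ℝ | ENNReal.ofReal t < 2 * h z}.indicator
          (fun t => ENNReal.ofReal (t ^ (q - 1 - 1))) t := by
        congr 1
        apply lintegral_congr
        intro t
        have hS : MeasurableSet {z | ENNReal.ofReal t < 2 * h z} :=
          measurableSet_lt measurable_const (hm.const_mul 2)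
        rw [← lintegral_indicator hS, ← lintegral_const_mul' _ _ (by simp)]
        apply lintegral_congr
        intro z
        by_cases hz : ENNReal.ofReal t < 2 * h z
        · simp [indicator, mul_comm]
        · simp [indicator, hz]
    _ = ENNReal.ofReal q * (5 ^ n * 2) * ∫⁻ z, ∫⁻ t in Ioi (0 : ℝ), h z *
          {t : ℝ | ENNReal.ofReal t < 2 * h z}.indicator
          (fun t => ENNReal.ofReal (t ^ (q - 1 - 1))) t := by
        rw [lintegral_lintegral_swap]
        apply Measurable.aemeasurable
        have : MeasurableSet {z : ℝ × EuclideanSpace ℝ (Fin n) | ENNReal.ofReal z.1 < 2 * h z.2} :=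
          measurableSet_lt (by fun_prop) (by fun_prop)
        exact Measurable.mul (by fun_prop)
          (Measurable.indicator (f := fun z : ℝ × EuclideanSpace ℝ (Fin n) =>
          ENNReal.ofReal (z.1 ^ (q - 1 - 1))) (by fun_prop) this)
    _ = ENNReal.ofReal q * (5 ^ n * 2) * ∫⁻ z, 
          (ENNReal.ofReal (q - 1))⁻¹ * 2 ^ (q - 1) * (h z ^ q) := by
        congr 1
        apply lintegral_congr
        intro z
        have hm2 : Measurable ({t : ℝ | ENNReal.ofReal t < 2 * h z}.indicator
          (fun t => ENNReal.ofReal (t ^ (q - 1 - 1)))) :=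
          Measurable.indicator (by fun_prop) (measurableSet_lt (by fun_prop) (by fun_prop))
        rw [lintegral_const_mul _ hm2]
        have := layer_top (q - 1) hq1 (2 * h z)
        have h3 : (ENNReal.ofReal (q - 1))⁻¹ * (2 * h z) ^ (q - 1) = ∫⁻ t in Ioi (0 : ℝ),
          {t : ℝ | ENNReal.ofReal t < 2 * h z}.indicator
          (fun t => ENNReal.ofReal (t ^ (q - 1 - 1))) t := by
          rw [this, ← mul_assoc, ENNReal.inv_mul_cancel (by simpa using hq) (by simp), one_mul]
        rw [← h3, ENNReal.mul_rpow_of_nonneg _ _ hq1.le]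
        have h4 : h z ^ q = h z * h z ^ (q - 1) := by
          conv_lhs => rw [show q = 1 + (q - 1) by ring]
          rw [ENNReal.rpow_add_of_nonneg _ _ zero_le_one hq1.le, ENNReal.rpow_one]
        rw [h4]; ring
    _ = _ := by
        rw [lintegral_const_mul' _ _ (ENNReal.mul_ne_top (by simp [hq])
          (ENNReal.rpow_ne_top_of_nonneg (by linarith) (by simp))), ← mul_assoc]

/-- Pointwise chain estimate. -/
lemma chain_bound (n : ℕ) (α : ℝ) (hα : 0 < α)
    (x : EuclideanSpace ℝ (Fin n)) (r : ℝ) (hr : 0 < r)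
    (f g : EuclideanSpace ℝ (Fin n) → ℝ) (hg : Measurable g)
    (N : Set (EuclideanSpace ℝ (Fin n))) (hN : volume N = 0)
    (H : ∀ y ∈ ball x r \ N, ∀ z ∈ ball x r \ N, ‖y - z‖ ≤ r / 4 →
      |f y - f z| ≤ ‖y - z‖ * (g y + g z)) :
    ∃ c : ℝ, ∀ y ∈ ball x r \ N, edist (f y) c ≤ 3 * ∑' i : ℕ,
      ENNReal.ofReal ((19 / 20) ^ i * r) *
        ((volume (ball (y + ((19 / 20 : ℝ) ^ i) • (x - y)) ((19 / 20) ^ i * r / 20)))⁻¹ *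
          ∫⁻ z in ball (y + ((19 / 20 : ℝ) ^ i) • (x - y)) ((19 / 20) ^ i * r / 20),
            ENNReal.ofReal (g z) ^ α) ^ (1 / α) := by
  have sel : ∀ (w : EuclideanSpace ℝ (Fin n)) (ρ : ℝ), 0 < ρ → ∃ ζ ∈ ball w ρ \ N,
      ENNReal.ofReal (g ζ) ≤
        ((volume (ball w ρ))⁻¹ * ∫⁻ z in ball w ρ, ENNReal.ofReal (g z) ^ α) ^ (1 / α) := by
    intro w ρ hρ
    have h1 : volume.restrict (ball w ρ) ≠ 0 := by
      rw [Ne, Measure.restrict_eq_zero]; exact vol_ball_ne_zero n w hρ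
    have h2 : volume.restrict (ball w ρ) (N ∪ (ball w ρ)ᶜ) = 0 := by
      rw [measure_union_null_iff]
      refine ⟨le_antisymm ((Measure.restrict_apply_le _ _).trans hN.le) bot_le, ?_⟩
      rw [Measure.restrict_apply measurableSet_ball.compl]
      simp
    have h3 : IsFiniteMeasure (volume.restrict (ball w ρ)) :=
      ⟨by simpa using vol_ball_ne_top n w ρ |>.lt_top⟩
    obtain ⟨ζ, hζ, hle⟩ := exists_notMem_null_le_laverage (f := fun z => ENNReal.ofReal (g z) ^ α)
      h1 (by fun_prop) h2
    simp only [mem_union, not_or, mem_compl_iff, not_not] at hζ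
    refine ⟨ζ, ⟨hζ.2, hζ.1⟩, ?_⟩
    rw [setLAverage_eq, ENNReal.div_eq_inv_mul] at hle
    rw [one_div, ENNReal.le_rpow_inv_iff hα]
    exact hle
  choose! ζ hζ hζa using sel
  refine ⟨f (ζ x (r / 20)), ?_⟩
  rintro y ⟨hy, hyN⟩
  have hyx : ‖x - y‖ < r := by rwa [mem_ball, dist_comm, dist_eq_norm] at hy
  set L : ℕ → ℝ := fun i => (19 / 20 : ℝ) ^ i with hL
  have hL0 : ∀ i, 0 < L i := fun i => by positivity
  have hL1 : ∀ i, L i ≤ 1 := fun i => pow_le_one₀ (by norm_num) (by norm_num)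
  have hLs : ∀ i, L (i + 1) = 19 / 20 * L i := fun i => by simp [hL, pow_succ]; ring
  set w : ℕ → EuclideanSpace ℝ (Fin n) := fun i => y + L i • (x - y) with hw
  set Z : ℕ → EuclideanSpace ℝ (Fin n) := fun i => ζ (w i) (L i * r / 20) with hZ
  set a : ℕ → ℝ≥0∞ := fun i => ((volume (ball (w i) (L i * r / 20)))⁻¹ *
          ∫⁻ z in ball (w i) (L i * r / 20), ENNReal.ofReal (g z) ^ α) ^ (1 / α) with ha
  have hρ : ∀ i, 0 < L i * r / 20 := fun i => by have := hL0 i; positivity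
  have hZw : ∀ i, ‖Z i - w i‖ < L i * r / 20 := fun i => by
    have := (hζ (w i) _ (hρ i)).1
    rwa [mem_ball, dist_eq_norm] at this
  have hZN : ∀ i, Z i ∉ N := fun i => (hζ (w i) _ (hρ i)).2
  have hZa : ∀ i, ENNReal.ofReal (g (Z i)) ≤ a i := fun i => hζa (w i) _ (hρ i)
  have hwx : ∀ i, ‖w i - x‖ ≤ (1 - L i) * r := fun i => by
    have : w i - x = (1 - L i) • (y - x) := by simp only [hw]; module
    rw [this, norm_smul, Real.norm_of_nonneg (by linarith [hL1 i]), norm_sub_rev]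
    exact mul_le_mul_of_nonneg_left hyx.le (by linarith [hL1 i])
  have hwy : ∀ i, ‖w i - y‖ ≤ L i * r := fun i => by
    have : w i - y = L i • (x - y) := by simp only [hw]; module
    rw [this, norm_smul, Real.norm_of_nonneg (hL0 i).le]
    exact mul_le_mul_of_nonneg_left hyx.le (hL0 i).le
  have hww : ∀ i, ‖w i - w (i + 1)‖ ≤ L i * r / 20 := fun i => by
    have : w i - w (i + 1) = (L i / 20) • (x - y) := by
      simp only [hw, hLs]; module
    rw [this, norm_smul, Real.norm_of_nonneg (by linarith [hL0 i])]
    have := mul_le_mul_of_nonneg_left hyx.le (hL0 i).le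
    linarith
  have hZB : ∀ i, Z i ∈ ball x r \ N := fun i => by
    refine ⟨?_, hZN i⟩
    rw [mem_ball, dist_eq_norm]
    have h1 : ‖Z i - x‖ ≤ ‖Z i - w i‖ + ‖w i - x‖ := norm_sub_le_norm_sub_add_norm_sub _ _ _
    have := mul_pos (hL0 i) hr
    linarith [hZw i, hwx i]
  have hZZ : ∀ i, ‖Z i - Z (i + 1)‖ ≤ L i * r * (3 / 20) := fun i => by
    have h1 : ‖Z i - Z (i + 1)‖ ≤ ‖Z i - w i‖ + ‖w i - Z (i + 1)‖ :=
      norm_sub_le_norm_sub_add_norm_sub _ _ _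
    have h2 : ‖w i - Z (i + 1)‖ ≤ ‖w i - w (i + 1)‖ + ‖w (i + 1) - Z (i + 1)‖ :=
      norm_sub_le_norm_sub_add_norm_sub _ _ _
    have h3 := hZw (i + 1)
    rw [norm_sub_rev, hLs] at h3
    have := mul_pos (hL0 i) hr
    linarith [hZw i, hww i]
  have hyZ : ∀ i, ‖y - Z i‖ ≤ 2 * (L i * r) := fun i => by
    have h1 : ‖Z i - y‖ ≤ ‖Z i - w i‖ + ‖w i - y‖ := norm_sub_le_norm_sub_add_norm_sub _ _ _
    rw [norm_sub_rev]
    have := mul_pos (hL0 i) hr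
    linarith [hZw i, hwy i]
  -- edist consequences
  have conv : ∀ u ∈ ball x r \ N, ∀ v ∈ ball x r \ N, ∀ D : ℝ, ‖u - v‖ ≤ D → ‖u - v‖ ≤ r / 4 →
      edist (f u) (f v) ≤ ENNReal.ofReal D * (ENNReal.ofReal (g u) + ENNReal.ofReal (g v)) := by
    intro u hu v hv D hD hr4
    rw [edist_dist, Real.dist_eq]
    refine (ENNReal.ofReal_le_ofReal (H u hu v hv hr4)).trans ?_
    rw [ENNReal.ofReal_mul (norm_nonneg _)]
    gcongr
    exact ENNReal.ofReal_add_le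
  have step : ∀ i, edist (f (Z i)) (f (Z (i + 1))) ≤
      ENNReal.ofReal (L i * r) * a i + 2 * (ENNReal.ofReal (L (i + 1) * r) * a (i + 1)) := by
    intro i
    have hp := mul_pos (hL0 i) hr
    have hle : L i * r ≤ r := by nlinarith [hL1 i]
    refine (conv _ (hZB i) _ (hZB (i + 1)) (L i * r) (by linarith [hZZ i])
      (by linarith [hZZ i])).trans ?_
    rw [mul_add]
    refine add_le_add ?_ ?_
    · gcongr
      exact hZa i
    · rw [← mul_assoc]
      gcongr
      · rw [show (2 : ℝ≥0∞) = ENNReal.ofReal 2 by simp, ← ENNReal.ofReal_mul (by norm_num)]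
        apply ENNReal.ofReal_le_ofReal
        rw [hLs]; linarith
      · exact hZa (i + 1)
  set S : ℝ≥0∞ := ∑' i : ℕ, ENNReal.ofReal (L i * r) * a i with hS
  change edist (f y) (f (ζ x (r / 20))) ≤ 3 * S
  have hZ0 : ζ x (r / 20) = Z 0 := by simp [hZ, hw, hL]
  rw [hZ0]
  by_cases hSt : S = ⊤
  · rw [hSt, ENNReal.mul_top (by simp)]; exact le_top
  have sumbd : ∀ k, edist (f (Z 0)) (f (Z k)) ≤ 3 * S := by
    intro k
    calc edist (f (Z 0)) (f (Z k)) ≤ ∑ i ∈ Finset.range k, edist (f (Z i)) (f (Z (i + 1))) :=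
          edist_le_range_sum_edist (fun i => f (Z i)) k
      _ ≤ ∑ i ∈ Finset.range k, (ENNReal.ofReal (L i * r) * a i +
            2 * (ENNReal.ofReal (L (i + 1) * r) * a (i + 1))) := Finset.sum_le_sum fun i _ => step i
      _ = ∑ i ∈ Finset.range k, ENNReal.ofReal (L i * r) * a i +
          2 * ∑ i ∈ Finset.range k, ENNReal.ofReal (L (i + 1) * r) * a (i + 1) := by
          rw [Finset.sum_add_distrib, Finset.mul_sum]
      _ ≤ S + 2 * S := by
          gcongr
          · exact ENNReal.sum_le_tsum _
          · refine (ENNReal.sum_le_tsum _).trans ?_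
            exact ENNReal.tsum_comp_le_tsum_of_injective (add_left_injective 1)
              (fun i => ENNReal.ofReal (L i * r) * a i)
      _ = 3 * S := by ring
  have hLt : Filter.Tendsto L Filter.atTop (nhds 0) :=
    tendsto_pow_atTop_nhds_zero_of_lt_one (by norm_num) (by norm_num)
  have hterm : Filter.Tendsto (fun i => ENNReal.ofReal (L i * r) * a i) Filter.atTop (nhds 0) :=
    ENNReal.tendsto_atTop_zero_of_tsum_ne_top hSt
  have hlim : Filter.Tendsto (fun k => (2 * (ENNReal.ofReal (L k * r) * ENNReal.ofReal (g y)) +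
      2 * (ENNReal.ofReal (L k * r) * a k)) + 3 * S) Filter.atTop (nhds ((2 * (0 * ENNReal.ofReal (g y))
        + 2 * 0) + 3 * S)) := by
    refine Filter.Tendsto.add (Filter.Tendsto.add ?_ ?_) tendsto_const_nhds
    · refine ENNReal.Tendsto.const_mul ?_ (by simp)
      refine ENNReal.Tendsto.mul_const ?_ (by simp)
      have := ENNReal.tendsto_ofReal (hLt.mul_const r)
      simpa using this
    · exact ENNReal.Tendsto.const_mul hterm (by simp)
  have hev : ∀ᶠ k in Filter.atTop, edist (f y) (f (Z 0)) ≤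
      (2 * (ENNReal.ofReal (L k * r) * ENNReal.ofReal (g y)) +
      2 * (ENNReal.ofReal (L k * r) * a k)) + 3 * S := by
    have : ∀ᶠ k in Filter.atTop, L k < 1 / 8 := hLt.eventually (gt_mem_nhds (by norm_num))
    filter_upwards [this] with k hk
    refine (edist_triangle _ (f (Z k)) _).trans ?_
    gcongr
    · refine (conv y ⟨hy, hyN⟩ _ (hZB k) _ (hyZ k) ((hyZ k).trans (by nlinarith))).trans ?_
      rw [ENNReal.ofReal_mul (by norm_num), mul_add, mul_assoc, mul_assoc]
      simp only [ENNReal.ofReal_ofNat]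
      gcongr
      exact hZa k
    · rw [edist_comm]; exact sumbd k
  have := ge_of_tendsto hlim hev
  simpa using this

lemma overlap_bound (n : ℕ) (x : EuclideanSpace ℝ (Fin n)) (r s : ℝ) (hs : 0 < s)
    (G : EuclideanSpace ℝ (Fin n) → ℝ≥0∞) (hG : Measurable G) :
    (Measurable fun y => ∫⁻ z in ball x r, (ball y s).indicator G z) ∧
    ∫⁻ y in ball x r, ∫⁻ z in ball x r, (ball y s).indicator G z ≤
      (∫⁻ z in ball x r, G z) * (ENNReal.ofReal s ^ n *
        volume (ball (0 : EuclideanSpace ℝ (Fin n)) 1)) := by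
  have hm : Measurable fun q : EuclideanSpace ℝ (Fin n) × EuclideanSpace ℝ (Fin n) =>
      (ball q.1 s).indicator G q.2 := by
    have : MeasurableSet {q : EuclideanSpace ℝ (Fin n) × EuclideanSpace ℝ (Fin n) |
        dist q.2 q.1 < s} := measurableSet_lt (by fun_prop) (by fun_prop)
    exact Measurable.indicator (f := fun q : EuclideanSpace ℝ (Fin n) × EuclideanSpace ℝ (Fin n) =>
      G q.2) (by fun_prop) this
  refine ⟨hm.lintegral_prod_right', ?_⟩
  rw [lintegral_lintegral_swap hm.aemeasurable, ← lintegral_mul_const _ hG]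
  gcongr with z
  calc ∫⁻ y in ball x r, (ball y s).indicator G z ≤ ∫⁻ y, (ball y s).indicator G z :=
        setLIntegral_le_lintegral _ _
    _ = ∫⁻ y, (ball z s).indicator (fun _ => G z) y := by
        apply lintegral_congr
        intro y
        by_cases h : dist z y < s
        · have h' : dist y z < s := by rwa [dist_comm]
          simp [indicator, mem_ball, h, h']
        · have h' : ¬ dist y z < s := by rwa [dist_comm]
          simp [indicator, mem_ball, h, h']
    _ = G z * (ENNReal.ofReal s ^ n * volume (ball (0 : EuclideanSpace ℝ (Fin n)) 1)) := by
        rw [lintegral_indicator measurableSet_ball, setLIntegral_const, vol_ball n z hs]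

lemma poincare (n : ℕ) (α : ℝ) (hα : (n : ℝ) / (n + 1) < α) (hα0 : 0 < α) (hα1 : α < 1) :
    ∃ K : ℝ≥0∞, K ≠ ⊤ ∧ ∀ (x : EuclideanSpace ℝ (Fin n)) (r : ℝ), 0 < r →
    ∀ (f g : EuclideanSpace ℝ (Fin n) → ℝ), Measurable g →
    ∀ (N : Set (EuclideanSpace ℝ (Fin n))), volume N = 0 →
    (∀ y ∈ ball x r \ N, ∀ z ∈ ball x r \ N, ‖y - z‖ ≤ r / 4 →
      |f y - f z| ≤ ‖y - z‖ * (g y + g z)) →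
    ∃ c : ℝ, ∫⁻ y in ball x r, edist (f y) c ≤ K * ENNReal.ofReal r ^ (n + 1) *
      ((volume (ball x r))⁻¹ * ∫⁻ z in ball x r, ENNReal.ofReal (g z) ^ α) ^ (1 / α) := by
  set v := volume (ball (0 : EuclideanSpace ℝ (Fin n)) 1) with hv
  have hv0 : v ≠ 0 := vol_ball_ne_zero n 0 one_pos
  have hvt : v ≠ ⊤ := vol_ball_ne_top n 0 1
  set β : ℝ := 1 + n - n / α with hβdef
  have hβ : 0 < β := by
    have hn1 : (0 : ℝ) < n + 1 := by positivity
    have : (n : ℝ) / α < n + 1 := by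
      rw [div_lt_iff₀ hn1] at hα
      rw [div_lt_iff₀ hα0]; linarith
    linarith
  set Λ : ℝ≥0∞ := ENNReal.ofReal (19 / 20) with hΛ
  have hΛ1 : Λ ^ β < 1 := ENNReal.rpow_lt_one (by simp [hΛ]; norm_num) hβ
  set κ : ℝ≥0∞ := (ENNReal.ofReal (1 / 20)) ^ (-(n / α)) * (2 ^ n * v) with hκ
  have h20 : ENNReal.ofReal (1 / 20) ≠ 0 := by simp
  have hκt : κ ≠ ⊤ := by
    refine ENNReal.mul_ne_top ?_ (ENNReal.mul_ne_top (by simp) hvt)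
    exact ENNReal.rpow_ne_top_of_ne_zero h20 (by simp)
  refine ⟨3 * κ * (1 - Λ ^ β)⁻¹, ?_, ?_⟩
  · refine ENNReal.mul_ne_top (ENNReal.mul_ne_top (by simp) hκt) ?_
    rw [Ne, ENNReal.inv_eq_top, tsub_eq_zero_iff_le, not_le]
    exact hΛ1
  intro x r hr f g hg N hN H
  obtain ⟨c, hc⟩ := chain_bound n α hα0 x r hr f g hg N hN H
  refine ⟨c, ?_⟩
  set G : EuclideanSpace ℝ (Fin n) → ℝ≥0∞ := fun z => ENNReal.ofReal (g z) ^ α with hG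
  have hGm : Measurable G := by fun_prop
  set I := ∫⁻ z in ball x r, G z with hI
  have hα' : 0 ≤ 1 / α := by positivity
  have hα'' : 0 ≤ 1 / α - 1 := by
    rw [sub_nonneg, le_div_iff₀ hα0]; linarith
  have rp : ∀ J : ℝ≥0∞, J ^ (1 / α) = J ^ (1 / α - 1) * J := by
    intro J
    conv_lhs => rw [show 1 / α = (1 / α - 1) + 1 by ring]
    rw [ENNReal.rpow_add_of_nonneg _ _ hα'' zero_le_one, ENNReal.rpow_one]
  have Q : ∀ X : ℝ≥0∞, ((X ^ n)⁻¹) ^ (1 / α) = X ^ (-(n / α)) := by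
    intro X
    rw [← ENNReal.rpow_natCast, ← ENNReal.rpow_neg, ← ENNReal.rpow_mul]
    congr 1; ring
  set s : ℕ → ℝ := fun i => (19 / 20) ^ i * r with hs
  have hs0 : ∀ i, 0 < s i := fun i => by positivity
  have hvol : ∀ (w : EuclideanSpace ℝ (Fin n)) (ρ : ℝ), 0 < ρ →
      ((volume (ball w ρ))⁻¹) ^ (1 / α) = ENNReal.ofReal ρ ^ (-(n / α)) * v⁻¹ ^ (1 / α) := by
    intro w ρ hρ
    rw [vol_ball n w hρ, ENNReal.mul_inv (Or.inr hvt) (Or.inr hv0),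
      ENNReal.mul_rpow_of_nonneg _ _ hα', Q]
  set P : ℕ → EuclideanSpace ℝ (Fin n) → ℝ≥0∞ := fun i y =>
    ∫⁻ z in ball x r, (ball y (2 * s i)).indicator G z with hP
  set D : ℕ → ℝ≥0∞ := fun i => ENNReal.ofReal (s i) *
    (ENNReal.ofReal (s i / 20) ^ (-(n / α)) * v⁻¹ ^ (1 / α)) with hD
  have pt : ∀ y ∈ ball x r \ N, edist (f y) c ≤
      3 * ∑' i, D i * (I ^ (1 / α - 1)) * P i y := by
    intro y hy
    refine (hc y hy).trans ?_
    refine mul_le_mul' le_rfl (ENNReal.tsum_le_tsum fun i => ?_)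
    have hyx : ‖x - y‖ < r := by
      have := hy.1
      rwa [mem_ball, dist_comm, dist_eq_norm] at this
    have hL1 : (19 / 20 : ℝ) ^ i ≤ 1 := pow_le_one₀ (by norm_num) (by norm_num)
    have hL0 : 0 < (19 / 20 : ℝ) ^ i := by positivity
    have hp := mul_pos hL0 hr
    set w := y + ((19 / 20 : ℝ) ^ i) • (x - y) with hw
    have hsub1 : ball w (s i / 20) ⊆ ball x r := by
      apply ball_subset_ball'
      have : w - x = (1 - (19 / 20 : ℝ) ^ i) • (y - x) := by simp only [hw]; module
      rw [dist_eq_norm, this, norm_smul, Real.norm_of_nonneg (by linarith), norm_sub_rev]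
      have := mul_le_mul_of_nonneg_left hyx.le (sub_nonneg.2 hL1)
      simp only [hs]; linarith
    have hsub2 : ball w (s i / 20) ⊆ ball y (2 * s i) := by
      apply ball_subset_ball'
      have : w - y = ((19 / 20 : ℝ) ^ i) • (x - y) := by simp only [hw]; module
      rw [dist_eq_norm, this, norm_smul, Real.norm_of_nonneg hL0.le]
      have := mul_le_mul_of_nonneg_left hyx.le hL0.le
      simp only [hs]; linarith
    have hJ1 : ∫⁻ z in ball w (s i / 20), G z ≤ I := lintegral_mono_set hsub1
    have hJ2 : ∫⁻ z in ball w (s i / 20), G z ≤ P i y := by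
      simp only [hP]
      rw [lintegral_indicator measurableSet_ball, Measure.restrict_restrict measurableSet_ball]
      exact lintegral_mono_set (subset_inter hsub2 hsub1)
    change ENNReal.ofReal (s i) * ((volume (ball w (s i / 20)))⁻¹ *
      ∫⁻ z in ball w (s i / 20), G z) ^ (1 / α) ≤ _
    have hJ : (∫⁻ z in ball w (s i / 20), G z) ^ (1 / α) ≤ I ^ (1 / α - 1) * P i y := by
      rw [rp]
      gcongr
    rw [ENNReal.mul_rpow_of_nonneg _ _ hα', hvol _ _ (by have := hs0 i; positivity)]
    simp only [hD]
    rw [mul_assoc (_ * _) (I ^ _), mul_assoc (ENNReal.ofReal (s i))]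
    gcongr
  have Dcalc : ∀ i, D i * (ENNReal.ofReal (2 * s i) ^ n * v) =
      κ * (ENNReal.ofReal r ^ (n + 1) * (ENNReal.ofReal r ^ (-(n / α)) * v⁻¹ ^ (1 / α))) *
        (Λ ^ β) ^ i := by
    intro i
    have e1 : ENNReal.ofReal (s i) = Λ ^ i * ENNReal.ofReal r := by
      simp only [hs]
      rw [ENNReal.ofReal_mul (by positivity), ENNReal.ofReal_pow (by norm_num)]
    have e2 : ENNReal.ofReal (s i / 20) = Λ ^ i * ENNReal.ofReal r * ENNReal.ofReal (1 / 20) := by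
      rw [div_eq_mul_one_div, ENNReal.ofReal_mul (hs0 i).le, e1]
    have e3 : ENNReal.ofReal (2 * s i) = 2 * (Λ ^ i * ENNReal.ofReal r) := by
      rw [ENNReal.ofReal_mul (by norm_num), e1]; simp
    have hΛ0 : Λ ^ i ≠ 0 := by simp [hΛ]
    have hΛt : Λ ^ i ≠ ⊤ := by simp [hΛ]
    have hr0 : ENNReal.ofReal r ≠ 0 := by simp [hr]
    have e4 : (Λ ^ β) ^ i = Λ ^ i * (Λ ^ i) ^ n * (Λ ^ i) ^ (-(n / α)) := by
      rw [← ENNReal.rpow_natCast, ← ENNReal.rpow_mul, mul_comm, ENNReal.rpow_mul,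
        ENNReal.rpow_natCast, show β = 1 + n + (-(n / α)) by simp only [hβdef]; ring,
        ENNReal.rpow_add _ _ hΛ0 hΛt, ENNReal.rpow_add _ _ hΛ0 hΛt, ENNReal.rpow_one,
        ENNReal.rpow_natCast]
    simp only [hD]
    rw [e1, e2, e3, e4, ENNReal.mul_rpow_of_ne_zero (mul_ne_zero hΛ0 hr0) h20,
      ENNReal.mul_rpow_of_ne_zero hΛ0 hr0, hκ]
    ring
  calc ∫⁻ y in ball x r, edist (f y) c
      ≤ ∫⁻ y in ball x r, 3 * ∑' i, D i * (I ^ (1 / α - 1)) * P i y := by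
        apply lintegral_mono_ae
        have h1 : ∀ᵐ y ∂(volume.restrict (ball x r)), y ∈ ball x r :=
          ae_restrict_mem measurableSet_ball
        have h2 : ∀ᵐ y ∂(volume.restrict (ball x r)), y ∉ N :=
          ae_restrict_of_ae (measure_eq_zero_iff_ae_notMem.1 hN)
        filter_upwards [h1, h2] with y hy1 hy2 using pt y ⟨hy1, hy2⟩
    _ = 3 * ∑' i, D i * (I ^ (1 / α - 1)) * ∫⁻ y in ball x r, P i y := by
        have hPm : ∀ i, Measurable (P i) := fun i =>
          (overlap_bound n x r (2 * s i) (by linarith [hs0 i]) G hGm).1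
        rw [lintegral_const_mul' _ _ (by simp), lintegral_tsum
          (fun i => ((hPm i).const_mul _).aemeasurable)]
        congr 2
        ext i
        rw [lintegral_const_mul _ (hPm i)]
    _ ≤ 3 * ∑' i, D i * (I ^ (1 / α - 1)) * (I * (ENNReal.ofReal (2 * s i) ^ n * v)) := by
        gcongr with i
        exact (overlap_bound n x r (2 * s i) (by linarith [hs0 i]) G hGm).2
    _ = 3 * ∑' i, (κ * (ENNReal.ofReal r ^ (n + 1) * (ENNReal.ofReal r ^ (-(n / α)) *
          v⁻¹ ^ (1 / α))) * I ^ (1 / α)) * (Λ ^ β) ^ i := by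
        congr 2
        ext i
        rw [rp I]
        calc _ = D i * (ENNReal.ofReal (2 * s i) ^ n * v) * (I ^ (1 / α - 1) * I) := by ring
          _ = _ := by rw [Dcalc]; ring
    _ = _ := by
        rw [ENNReal.tsum_mul_left, ENNReal.tsum_geometric, ENNReal.mul_rpow_of_nonneg _ _ hα',
          hvol _ _ hr]
        ring

lemma ball_infDist_frontier_subset (n : ℕ) (Ω : Set (EuclideanSpace ℝ (Fin n))) (hΩ : IsOpen Ω)
    (x : EuclideanSpace ℝ (Fin n)) (hx : x ∈ Ω) (hd : 0 < infDist x (frontier Ω)) :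
    ball x (infDist x (frontier Ω)) ⊆ Ω := by
  refine IsPreconnected.subset_left_of_subset_union (v := (closure Ω)ᶜ) hΩ
    isClosed_closure.isOpen_compl ?_ ?_ ?_
    (convex_ball x _).isPreconnected
  · exact disjoint_compl_right_iff_subset.2 subset_closure
  · intro y hy
    have h1 : y ∉ frontier Ω := fun h => (disjoint_ball_infDist.le_bot ⟨hy, h⟩)
    by_cases hyΩ : y ∈ Ω
    · exact Or.inl hyΩ
    · right
      intro hc
      apply h1
      rw [frontier, hΩ.interior_eq]
      exact ⟨hc, hyΩ⟩
  · exact ⟨x, mem_ball_self hd, hx⟩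

lemma integral_pderiv_zero (n : ℕ) (j : Fin n) (φ : EuclideanSpace ℝ (Fin n) → ℝ)
    (h1 : ContDiff ℝ (⊤ : ℕ∞) φ) (h2 : HasCompactSupport φ) :
    Integrable (pderivIdx n j φ) ∧ ∫ y, pderivIdx n j φ y = 0 := by
  have hc : Continuous (pderivIdx n j φ) := by
    have := h1.continuous_fderiv (by simp)
    unfold pderivIdx
    fun_prop
  have hcs : HasCompactSupport (pderivIdx n j φ) := 
    (h2.fderiv (𝕜 := ℝ)).comp_left (g := fun L : EuclideanSpace ℝ (Fin n) →L[ℝ] ℝ =>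
      L (EuclideanSpace.single j 1)) (by simp)
  have hi : Integrable (pderivIdx n j φ) := hc.integrable_of_hasCompactSupport hcs
  refine ⟨hi, ?_⟩
  have := integral_mul_fderiv_eq_neg_fderiv_mul_of_integrable (μ := volume)
    (f := fun _ : EuclideanSpace ℝ (Fin n) => (1 : ℝ)) (g := φ)
    (v := EuclideanSpace.single j 1) (by simp) (by simp only [one_mul]; exact hi)
    (by simpa using h1.continuous.integrable_of_hasCompactSupport h2) (by simp)
    (fun x _ => (h1.differentiable (by simp)).differentiableAt)
  simpa [pderivIdx] using this

lemma pderiv_zero_of_notMem (n : ℕ) (j : Fin n) (φ : EuclideanSpace ℝ (Fin n) → ℝ)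
    (s : Set (EuclideanSpace ℝ (Fin n))) (hs : tsupport φ ⊆ s) (y) (hy : y ∉ s) :
    pderivIdx n j φ y = 0 := by
  have h : y ∉ tsupport φ := fun h => hy (hs h)
  have : y ∉ Function.support (fderiv ℝ φ) := fun h' => h (support_fderiv_subset ℝ h')
  rw [Function.mem_support, not_not] at this
  simp [pderivIdx, this]

lemma test_bound (n : ℕ) (Ω : Set (EuclideanSpace ℝ (Fin n))) (j : Fin n)
    (f φ : EuclideanSpace ℝ (Fin n) → ℝ) (x : EuclideanSpace ℝ (Fin n)) (r c : ℝ)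
    (hr : 0 < r) (hφ : memTestClassOne n x r φ) (hB : ball x r ⊆ Ω) :
    ENNReal.ofReal |∫ y in Ω, f y * pderivIdx n j φ y| ≤
      (ENNReal.ofReal r ^ (n + 1))⁻¹ * ∫⁻ y in ball x r, edist (f y) c := by
  obtain ⟨h1, h2, -, h4⟩ := hφ
  have hcs : HasCompactSupport φ := by
    refine HasCompactSupport.of_support_subset_isCompact (isCompact_closedBall x r) ?_
    exact (subset_tsupport φ).trans (h2.trans ball_subset_closedBall)
  have hz := pderiv_zero_of_notMem n j φ _ h2
  have e0 : ∫ y in Ω, f y * pderivIdx n j φ y = ∫ y, f y * pderivIdx n j φ y := by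
    apply setIntegral_eq_integral_of_forall_compl_eq_zero
    intro y hy
    rw [hz y (fun h => hy (hB h)), mul_zero]
  rw [e0]
  by_cases hi : Integrable (fun y => f y * pderivIdx n j φ y)
  swap
  · rw [integral_undef hi]; simp
  obtain ⟨hpi, hp0⟩ := integral_pderiv_zero n j φ h1 hcs
  have e1 : ∫ y, f y * pderivIdx n j φ y = ∫ y, (f y - c) * pderivIdx n j φ y := by
    simp_rw [sub_mul]
    rw [integral_sub hi (hpi.const_mul c), integral_const_mul, hp0]; simp
  rw [e1, ← Real.norm_eq_abs, ofReal_norm]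
  refine (enorm_integral_le_lintegral_enorm _).trans ?_
  rw [← lintegral_const_mul' _ _ (by simp [hr]), ← lintegral_indicator measurableSet_ball]
  gcongr with y
  by_cases hy : y ∈ ball x r
  · rw [indicator_of_mem hy, enorm_mul, mul_comm, edist_eq_enorm_sub]
    gcongr
    rw [← ofReal_norm, Real.norm_eq_abs, ← ENNReal.ofReal_pow hr.le, ← ENNReal.ofReal_inv_of_pos
      (by positivity), ← inv_pow]
    exact ENNReal.ofReal_le_ofReal (h4 j y)
  · rw [hz y hy]; simp

lemma part_one (n : ℕ) (hn : 1 ≤ n) (p : ℝ) (hp1 : (n : ℝ) / (n + 1) < p) (hp2 : p ≤ 1) :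
    ∃ C : ℝ≥0∞, C ≠ ⊤ ∧
      ∀ Ω : Set (EuclideanSpace ℝ (Fin n)), IsOpen Ω → 
      ∀ f : EuclideanSpace ℝ (Fin n) → ℝ,
        (∀ g : EuclideanSpace ℝ (Fin n) → ℝ, IsBallHajlaszGradientOn n f g Ω →
            (∫⁻ x in Ω, miyachiMax n Ω f x ^ p) ^ (1 / p) ≤
              C * (∫⁻ x in Ω, ENNReal.ofReal |g x| ^ p) ^ (1 / p)) := by
  have hnn : 0 ≤ (n : ℝ) / (n + 1) := by positivity
  have hp0 : 0 < p := by linarith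
  set α : ℝ := ((n : ℝ) / (n + 1) + p) / 2 with hαdef
  have hα : (n : ℝ) / (n + 1) < α := by linarith
  have hαp : α < p := by linarith
  have hα0 : 0 < α := by linarith
  have hα1 : α < 1 := by linarith
  obtain ⟨K, hK, hPo⟩ := poincare n α hα hα0 hα1
  have hq : 1 < p / α := by rw [lt_div_iff₀ hα0]; linarith
  obtain ⟨A, hA, hHL⟩ := hlMax_strong n hn (p / α) hq
  refine ⟨K * A ^ (1 / p), ENNReal.mul_ne_top hK
    (ENNReal.rpow_ne_top_of_nonneg (by positivity) hA), ?_⟩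
  intro Ω hΩ f g ⟨hgm, hg0, N, hN, H⟩
  set h : EuclideanSpace ℝ (Fin n) → ℝ≥0∞ := Ω.indicator (fun z => ENNReal.ofReal (g z) ^ α) with hh
  have hhm : Measurable h := Measurable.indicator (by fun_prop) hΩ.measurableSet
  have key : ∀ x ∈ Ω, miyachiMax n Ω f x ≤ K * (hlMax n h x) ^ (1 / α) := by
    intro x hx
    refine iSup_le fun j => iSup_le fun r => iSup_le fun φ => ?_
    obtain ⟨r, hr, hrd⟩ := r
    have hd : 0 < infDist x (frontier Ω) := by linarith
    have hB : ball x r ⊆ Ω := (ball_subset_ball (by linarith)).trans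
      (ball_infDist_frontier_subset n Ω hΩ x hx hd)
    obtain ⟨c, hc⟩ := hPo x r hr f g hgm N hN (by
      intro y hy z hz hyz
      refine H y ⟨hB hy.1, hy.2⟩ z ⟨hB hz.1, hz.2⟩ ?_
      have aux : ∀ u ∈ ball x r, r ≤ infDist u (frontier Ω) := by
        intro u hu
        have h1 := infDist_le_infDist_add_dist (s := frontier Ω) (x := x) (y := u)
        rw [mem_ball, dist_comm] at hu
        linarith
      have := le_min (aux y hy.1) (aux z hz.1)
      linarith)
    refine (test_bound n Ω j f φ.1 x r c hr φ.2 hB).trans ?_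
    have hr0 : ENNReal.ofReal r ^ (n + 1) ≠ 0 := by simp [hr]
    have hrt : ENNReal.ofReal r ^ (n + 1) ≠ ⊤ := by simp
    calc _ ≤ (ENNReal.ofReal r ^ (n + 1))⁻¹ * (K * ENNReal.ofReal r ^ (n + 1) *
      ((volume (ball x r))⁻¹ * ∫⁻ z in ball x r, ENNReal.ofReal (g z) ^ α) ^ (1 / α)) := by
          gcongr
      _ = ((ENNReal.ofReal r ^ (n + 1))⁻¹ * ENNReal.ofReal r ^ (n + 1)) * (K * 
        ((volume (ball x r))⁻¹ * ∫⁻ z in ball x r, ENNReal.ofReal (g z) ^ α) ^ (1 / α)) := by ring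
      _ = K * ((volume (ball x r))⁻¹ * ∫⁻ z in ball x r, ENNReal.ofReal (g z) ^ α) ^ (1 / α) := by
          rw [ENNReal.inv_mul_cancel hr0 hrt, one_mul]
      _ ≤ _ := by
          gcongr
          have e : ∫⁻ z in ball x r, ENNReal.ofReal (g z) ^ α = ∫⁻ z in ball x r, h z := by
            apply setLIntegral_congr_fun measurableSet_ball
            intro z hz
            simp [hh, hB hz]
          rw [e]
          exact le_iSup₂ (f := fun (r : ℝ) (_ : 0 < r) =>
            (volume (ball x r))⁻¹ * ∫⁻ z in ball x r, h z) r hr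
  calc (∫⁻ x in Ω, miyachiMax n Ω f x ^ p) ^ (1 / p)
      ≤ (∫⁻ x in Ω, K ^ p * hlMax n h x ^ (p / α)) ^ (1 / p) := by
        gcongr ?_ ^ _
        apply setLIntegral_mono' hΩ.measurableSet
        intro x hx
        refine (ENNReal.rpow_le_rpow (key x hx) hp0.le).trans ?_
        rw [ENNReal.mul_rpow_of_nonneg _ _ hp0.le, ← ENNReal.rpow_mul, one_div_mul_eq_div]
    _ ≤ (K ^ p * (A * ∫⁻ x, h x ^ (p / α))) ^ (1 / p) := by
        rw [lintegral_const_mul' _ _ (ENNReal.rpow_ne_top_of_nonneg hp0.le hK)]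
        gcongr
        exact (setLIntegral_le_lintegral _ _).trans (hHL h hhm)
    _ = (K ^ p * (A * ∫⁻ x in Ω, ENNReal.ofReal |g x| ^ p)) ^ (1 / p) := by
        congr 3
        rw [← lintegral_indicator hΩ.measurableSet]
        apply lintegral_congr
        intro x
        by_cases hx : x ∈ Ω
        · simp only [hh, indicator_of_mem hx]
          rw [← ENNReal.rpow_mul, mul_div_cancel₀ _ hα0.ne', abs_of_nonneg (hg0 x)]
        · simp only [hh, indicator_of_notMem hx]
          exact ENNReal.zero_rpow_of_pos (by positivity)
    _ = _ := by
        have hp' : 0 ≤ 1 / p := by positivity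
        rw [ENNReal.mul_rpow_of_nonneg _ _ hp', ENNReal.mul_rpow_of_nonneg _ _ hp',
          ← ENNReal.rpow_mul, mul_one_div_cancel hp0.ne', ENNReal.rpow_one, mul_assoc]

lemma miyachi_scaled (n : ℕ) (Ω : Set (EuclideanSpace ℝ (Fin n))) (j : Fin n)
    (f φ : EuclideanSpace ℝ (Fin n) → ℝ) (x : EuclideanSpace ℝ (Fin n)) (r K : ℝ)
    (hr : 0 < r) (hrd : r ≤ infDist x (frontier Ω) / 2) (hK : 0 < K)
    (h1 : ContDiff ℝ (⊤ : ℕ∞) φ) (h2 : tsupport φ ⊆ ball x r)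
    (h3 : ∀ z, |φ z| ≤ K * (r⁻¹) ^ n) (h4 : ∀ i z, |pderivIdx n i φ z| ≤ K * (r⁻¹) ^ (n + 1))
    (hM : miyachiMax n Ω f x ≠ ⊤) :
    |∫ y in Ω, f y * pderivIdx n j φ y| ≤ K * (miyachiMax n Ω f x).toReal := by
  set ψ : EuclideanSpace ℝ (Fin n) → ℝ := fun z => K⁻¹ * φ z with hψ
  have hd : ∀ i z, pderivIdx n i ψ z = K⁻¹ * pderivIdx n i φ z := by
    intro i z
    have := ((h1.differentiable (by simp)).differentiableAt (x := z)).hasFDerivAt.const_mul K⁻¹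
    simp [pderivIdx, hψ, this.fderiv]
  have hKi : 0 < K⁻¹ := by positivity
  have hmem : memTestClassOne n x r ψ := by
    refine ⟨contDiff_const.mul h1, ?_, ?_, ?_⟩
    · exact (tsupport_mul_subset_right).trans h2
    · intro z
      rw [hψ]
      simp only [abs_mul, abs_of_pos hKi]
      rw [inv_mul_le_iff₀ hK]
      exact h3 z
    · intro i z
      rw [hd, abs_mul, abs_of_pos hKi, inv_mul_le_iff₀ hK]
      exact h4 i z
  have hle : ENNReal.ofReal |∫ y in Ω, f y * pderivIdx n j ψ y| ≤ miyachiMax n Ω f x := by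
    unfold miyachiMax
    exact le_iSup_of_le j (le_iSup_of_le ⟨r, hr, hrd⟩ (le_iSup_of_le ⟨ψ, hmem⟩ le_rfl))
  have h5 := (ENNReal.ofReal_le_iff_le_toReal hM).1 hle
  have h6 : ∫ y in Ω, f y * pderivIdx n j ψ y = K⁻¹ * ∫ y in Ω, f y * pderivIdx n j φ y := by
    rw [← integral_const_mul]
    congr 1
    ext y
    rw [hd]; ring
  rw [h6, abs_mul, abs_of_pos hKi, inv_mul_le_iff₀ hK] at h5
  exact h5

lemma integrable_mul_cpt (n : ℕ) (Ω : Set (EuclideanSpace ℝ (Fin n)))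
    (f φ : EuclideanSpace ℝ (Fin n) → ℝ) (hf : LocallyIntegrableOn f Ω)
    (K : Set (EuclideanSpace ℝ (Fin n))) (hK : IsCompact K) (hKΩ : K ⊆ Ω)
    (hφ : Continuous φ) (h0 : ∀ z ∉ K, φ z = 0) :
    Integrable (fun z => f z * φ z) := by
  have h1 : IntegrableOn f K := hf.integrableOn_compact_subset hKΩ hK
  have h2 : IntegrableOn (fun z => f z * φ z) K := h1.mul_continuousOn hφ.continuousOn hK
  refine (integrableOn_iff_integrable_of_support_subset ?_).1 h2
  intro z hz
  by_contra h
  exact hz (by simp [h0 z h])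

section
variable (n : ℕ) (x : EuclideanSpace ℝ (Fin n)) (η : EuclideanSpace ℝ (Fin n) → ℝ)

/-- Auxiliary test function. -/
def PhiAux (j : Fin n) (u : ℝ) (z : EuclideanSpace ℝ (Fin n)) : ℝ :=
  u ^ n * ((EuclideanSpace.proj j : EuclideanSpace ℝ (Fin n) →L[ℝ] ℝ) (z - x) * η (u • (z - x)))

lemma PhiAux_contDiff (j : Fin n) (u : ℝ) (h1 : ContDiff ℝ (⊤ : ℕ∞) η) :
    ContDiff ℝ (⊤ : ℕ∞) (PhiAux n x η j u) := by
  unfold PhiAux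
  fun_prop

lemma PhiAux_pderiv (i j : Fin n) (u : ℝ) (h1 : ContDiff ℝ (⊤ : ℕ∞) η)
    (z : EuclideanSpace ℝ (Fin n)) :
    pderivIdx n i (PhiAux n x η j u) z =
      u ^ n * ((if i = j then η (u • (z - x)) else 0) +
        (z - x) j * (u * fderiv ℝ η (u • (z - x)) (EuclideanSpace.single i 1))) := by
  have hη : HasFDerivAt η (fderiv ℝ η (u • (z - x))) (u • (z - x)) :=
    (h1.differentiable (by simp)).differentiableAt.hasFDerivAt
  have ha : HasFDerivAt (fun z : EuclideanSpace ℝ (Fin n) => z - x)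
    (ContinuousLinearMap.id ℝ _) z := (hasFDerivAt_id z).sub_const x
  have hb := ha.const_smul u
  have hc := hη.comp z hb
  have hd := ((EuclideanSpace.proj j : EuclideanSpace ℝ (Fin n) →L[ℝ] ℝ).hasFDerivAt
    (x := z - x)).comp z ha
  have he := (hd.mul hc).const_mul (u ^ n)
  have hf : HasFDerivAt (PhiAux n x η j u) _ z := he
  rw [pderivIdx, hf.fderiv]
  simp [PiLp.single_apply, eq_comm]
  split_ifs <;> ring

lemma PhiAux_tsupport (j : Fin n) (u R : ℝ) (hu : 0 < u) (h2 : tsupport η ⊆ ball 0 R) :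
    tsupport (PhiAux n x η j u) ⊆ ball x (u⁻¹ * R) := by
  have hsub : tsupport (PhiAux n x η j u) ⊆ (fun z => u • (z - x)) ⁻¹' (tsupport η) := by
    apply closure_minimal
    · intro z hz
      apply subset_tsupport
      intro h
      exact hz (by simp [PhiAux, h])
    · exact (isClosed_tsupport η).preimage (by fun_prop)
  intro z hz
  have := h2 (hsub hz)
  rw [mem_ball_zero_iff, norm_smul, Real.norm_of_nonneg hu.le] at this
  rw [mem_ball, dist_eq_norm]
  rw [inv_mul_eq_div, lt_div_iff₀ hu]
  linarith

lemma PhiAux_bounds (j : Fin n) (u R A B : ℝ) (hu : 0 < u) (hR : 0 < R)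
    (h1 : ContDiff ℝ (⊤ : ℕ∞) η) (h2 : tsupport η ⊆ ball 0 R) 
    (hA : ∀ z, |η z| ≤ A) (hB : ∀ z, ‖fderiv ℝ η z‖ ≤ B) :
    (∀ z, |PhiAux n x η j u z| ≤ (u⁻¹ * (R ^ (n + 1) * (A + R * B))) * ((u⁻¹ * R)⁻¹) ^ n) ∧
    (∀ i z, |pderivIdx n i (PhiAux n x η j u) z| ≤
      (u⁻¹ * (R ^ (n + 1) * (A + R * B))) * ((u⁻¹ * R)⁻¹) ^ (n + 1)) := by
  have hA0 : 0 ≤ A := (abs_nonneg _).trans (hA 0)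
  have hB0 : 0 ≤ B := (norm_nonneg _).trans (hB 0)
  have e1 : (u⁻¹ * (R ^ (n + 1) * (A + R * B))) * ((u⁻¹ * R)⁻¹) ^ n
      = u ^ n * (u⁻¹ * R * (A + R * B)) := by
    rw [mul_inv, inv_inv, mul_pow, inv_pow]; field_simp; ring
  have e2 : (u⁻¹ * (R ^ (n + 1) * (A + R * B))) * ((u⁻¹ * R)⁻¹) ^ (n + 1)
      = u ^ n * (A + R * B) := by
    rw [mul_inv, inv_inv, mul_pow, inv_pow]; field_simp; ring
  have hz0 : ∀ (j : Fin n) z, z ∉ ball x (u⁻¹ * R) → PhiAux n x η j u z = 0 := fun j z hz =>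
    image_eq_zero_of_notMem_tsupport (fun h => hz (PhiAux_tsupport n x η j u R hu h2 h))
  have hcoord : ∀ (j : Fin n) z, z ∈ ball x (u⁻¹ * R) → |(z - x) j| ≤ u⁻¹ * R := by
    intro j z hz
    rw [mem_ball, dist_eq_norm] at hz
    exact (PiLp.norm_apply_le (z - x) j).trans hz.le
  have hun : 0 ≤ u ^ n := by positivity
  constructor
  · intro z
    rw [e1]
    by_cases hz : z ∈ ball x (u⁻¹ * R)
    · rw [PhiAux, abs_mul, abs_of_nonneg hun, abs_mul]
      gcongr
      · exact hcoord j z hz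
      · exact (hA _).trans (by nlinarith)
    · rw [hz0 j z hz, abs_zero]; positivity
  · intro i z
    rw [e2]
    by_cases hz : z ∈ ball x (u⁻¹ * R)
    · rw [PhiAux_pderiv n x η i j u h1, abs_mul, abs_of_nonneg hun]
      gcongr
      refine (abs_add_le _ _).trans (add_le_add ?_ ?_)
      · split_ifs
        · exact hA _
        · simpa using hA0
      · rw [abs_mul, abs_mul, abs_of_pos hu]
        have h5 : |fderiv ℝ η (u • (z - x)) (EuclideanSpace.single i 1)| ≤ B := by
          have := (fderiv ℝ η (u • (z - x))).le_opNorm (EuclideanSpace.single i 1)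
          rw [PiLp.norm_single, norm_one, mul_one] at this
          exact this.trans (hB _)
        calc |(z - x) j| * (u * _) ≤ (u⁻¹ * R) * (u * B) := by
              gcongr
              exact hcoord j z hz
          _ = R * B := by field_simp
    · rw [pderiv_zero_of_notMem n i _ _ (PhiAux_tsupport n x η j u R hu h2) z hz, abs_zero]
      positivity

/-- derivative of the dilated kernel -/
lemma kernel_hasDerivAt (u : ℝ) (hu : 0 < u) (h1 : ContDiff ℝ (⊤ : ℕ∞) η)
    (z : EuclideanSpace ℝ (Fin n)) :
    HasDerivAt (fun u : ℝ => u ^ n * η (u • (z - x)))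
      (u⁻¹ * ∑ j, pderivIdx n j (PhiAux n x η j u) z) u := by
  have hη : HasFDerivAt η (fderiv ℝ η (u • (z - x))) (u • (z - x)) :=
    (h1.differentiable (by simp)).differentiableAt.hasFDerivAt
  have ha : HasDerivAt (fun u : ℝ => u • (z - x)) (z - x) u := by
    simpa using (hasDerivAt_id u).smul_const (z - x)
  have hb := (hasDerivAt_pow n u).mul (hη.comp_hasDerivAt u ha)
  refine HasDerivAt.congr_deriv (f := fun u : ℝ => u ^ n * η (u • (z - x))) hb ?_
  have hs : fderiv ℝ η (u • (z - x)) (z - x) = ∑ j, (z - x) j *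
      fderiv ℝ η (u • (z - x)) (EuclideanSpace.single j 1) := by
    generalize fderiv ℝ η (u • (z - x)) = L
    conv_lhs => rw [← (EuclideanSpace.basisFun (Fin n) ℝ).sum_repr (z - x)]
    simp [map_sum]
  simp only [PhiAux_pderiv n x η _ _ u h1, if_true]
  rw [hs, ← Finset.mul_sum, Finset.sum_add_distrib]
  simp only [Finset.sum_const, Finset.card_univ, Fintype.card_fin, nsmul_eq_mul, Function.comp]
  have h3 : ∑ j, (z - x) j * (u * fderiv ℝ η (u • (z - x)) (EuclideanSpace.single j 1))
    = u * ∑ j, (z - x) j * fderiv ℝ η (u • (z - x)) (EuclideanSpace.single j 1) := by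
    rw [Finset.mul_sum]; congr 1; ext j; ring
  rw [h3]
  rcases n with _ | k
  · simp
  · simp only [Nat.add_sub_cancel]
    field_simp
    ring

end

lemma G_hasDerivAt (n : ℕ) (Ω : Set (EuclideanSpace ℝ (Fin n))) (hΩ : IsOpen Ω)
    (f : EuclideanSpace ℝ (Fin n) → ℝ) (hf : LocallyIntegrableOn f Ω)
    (x : EuclideanSpace ℝ (Fin n)) (hx : x ∈ Ω) (η : EuclideanSpace ℝ (Fin n) → ℝ)
    (R A B : ℝ) (hR : 0 < R) (hRd : R ≤ infDist x (frontier Ω) / 2)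
    (h1 : ContDiff ℝ (⊤ : ℕ∞) η) (h2 : tsupport η ⊆ ball 0 R)
    (hA : ∀ z, |η z| ≤ A) (hB : ∀ z, ‖fderiv ℝ η z‖ ≤ B) (u : ℝ) (hu : 1 ≤ u) :
    HasDerivAt (fun u : ℝ => ∫ z in Ω, f z * (u ^ n * η (u • (z - x))))
      (u⁻¹ * ∑ j, ∫ z in Ω, f z * pderivIdx n j (PhiAux n x η j u) z) u := by
  have hA0 : 0 ≤ A := (abs_nonneg _).trans (hA 0)
  have hB0 : 0 ≤ B := (norm_nonneg _).trans (hB 0)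
  set Kb := closedBall x (4 / 3 * R) with hKb
  have hKΩ : Kb ⊆ Ω := by
    refine Subset.trans ?_ (ball_infDist_frontier_subset n Ω hΩ x hx (by linarith))
    exact closedBall_subset_ball (by linarith)
  have hKc : IsCompact Kb := isCompact_closedBall _ _
  have hfK : IntegrableOn f Kb := hf.integrableOn_compact_subset hKΩ hKc
  have hinK : ∀ u' : ℝ, 3 / 4 < u' → ball x (u'⁻¹ * R) ⊆ Kb := by
    intro u' hu'
    refine ball_subset_closedBall.trans (closedBall_subset_closedBall ?_)
    gcongr
    rw [inv_le_comm₀ (by linarith) (by norm_num)]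
    linarith
  have hη0 : ∀ u' : ℝ, 3 / 4 < u' → ∀ z ∉ Kb, u' ^ n * η (u' • (z - x)) = 0 := by
    intro u' hu' z hz
    have : u' • (z - x) ∉ tsupport η := by
      intro h
      have := h2 h
      rw [mem_ball_zero_iff, norm_smul, Real.norm_of_nonneg (by linarith)] at this
      apply hz
      apply hinK u' hu'
      rw [mem_ball, dist_eq_norm, inv_mul_eq_div, lt_div_iff₀ (by linarith)]
      linarith
    rw [image_eq_zero_of_notMem_tsupport this, mul_zero]
  have hp0 : ∀ (u' : ℝ), 3 / 4 < u' → ∀ (j : Fin n), ∀ z ∉ Kb,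
      pderivIdx n j (PhiAux n x η j u') z = 0 := by
    intro u' hu' j z hz
    exact pderiv_zero_of_notMem n j _ _
      ((PhiAux_tsupport n x η j u' R (by linarith) h2).trans (hinK u' hu')) z hz
  have hpc : ∀ (u' : ℝ) (j : Fin n), Continuous (pderivIdx n j (PhiAux n x η j u')) := by
    intro u' j
    have := (PhiAux_contDiff n x η j u' h1).continuous_fderiv (by simp)
    unfold pderivIdx
    fun_prop
  have hkc : ∀ u' : ℝ, Continuous (fun z => u' ^ n * η (u' • (z - x))) := by
    intro u'
    have := h1.continuous
    fun_prop
  have hfm : AEStronglyMeasurable f (volume.restrict Ω) := hf.aestronglyMeasurable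
  set D : ℝ := 4 / 3 * (n * ((u + 1) ^ n * (A + R * B))) with hD
  have key := hasDerivAt_integral_of_dominated_loc_of_deriv_le (μ := volume.restrict Ω)
    (F := fun (u : ℝ) z => f z * (u ^ n * η (u • (z - x))))
    (F' := fun (u : ℝ) z => f z * (u⁻¹ * ∑ j, pderivIdx n j (PhiAux n x η j u) z))
    (x₀ := u) (s := Ioo (3 / 4) (u + 1)) (bound := Kb.indicator (fun z => D * |f z|))
    (Ioo_mem_nhds (by linarith) (by linarith))
    (Filter.Eventually.of_forall fun u' => hfm.mul (hkc u').aestronglyMeasurable)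
    ((integrable_mul_cpt n Ω f _ hf Kb hKc hKΩ (hkc u) (hη0 u (by linarith))).integrableOn)
    (hfm.mul (by
      refine Continuous.aestronglyMeasurable ?_
      have := hpc u
      fun_prop))
    (Filter.Eventually.of_forall fun z u' hu' => ?_)
    (((integrable_indicator_iff hKc.measurableSet).2 (hfK.abs.const_mul D)).integrableOn)
    (Filter.Eventually.of_forall fun z u' hu' =>
      (kernel_hasDerivAt n x η u' (by linarith [hu'.1]) h1 z).const_mul (f z))
  · refine key.2.congr_deriv ?_
    symm
    rw [← integral_finsetSum, ← integral_const_mul]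
    · congr 1
      ext z
      rw [← Finset.mul_sum]
      ring
    · intro j _
      exact (integrable_mul_cpt n Ω f _ hf Kb hKc hKΩ (hpc u j)
        (hp0 u (by linarith) j)).integrableOn
  · have hu'0 : 0 < u' := by linarith [hu'.1]
    by_cases hz : z ∈ Kb
    · rw [indicator_of_mem hz, Real.norm_eq_abs, abs_mul, mul_comm]
      gcongr
      rw [abs_mul, abs_of_pos (inv_pos.2 hu'0), hD]
      gcongr
      · rw [inv_le_comm₀ hu'0 (by norm_num)]
        linarith [hu'.1]
      · refine (Finset.abs_sum_le_sum_abs _ _).trans ?_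
        refine (Finset.sum_le_card_nsmul _ _ ((u + 1) ^ n * (A + R * B)) ?_).trans (by simp)
        intro j _
        refine ((PhiAux_bounds n x η j u' R A B hu'0 hR h1 h2 hA hB).2 j z).trans ?_
        have e2 : (u'⁻¹ * (R ^ (n + 1) * (A + R * B))) * ((u'⁻¹ * R)⁻¹) ^ (n + 1)
            = u' ^ n * (A + R * B) := by
          rw [mul_inv, inv_inv, mul_pow, inv_pow]; field_simp; ring
        rw [e2]
        gcongr
        exact hu'.2.le
    · rw [indicator_of_notMem hz]
      rw [Finset.sum_eq_zero (fun j _ => hp0 u' hu'.1 j z hz)]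
      simp

lemma core_bound (n : ℕ) (Ω : Set (EuclideanSpace ℝ (Fin n))) (hΩ : IsOpen Ω)
    (f : EuclideanSpace ℝ (Fin n) → ℝ) (hf : LocallyIntegrableOn f Ω)
    (x : EuclideanSpace ℝ (Fin n)) (hx : x ∈ Ω) (η : EuclideanSpace ℝ (Fin n) → ℝ)
    (R A B : ℝ) (hR : 0 < R) (hRd : R ≤ infDist x (frontier Ω) / 2)
    (h1 : ContDiff ℝ (⊤ : ℕ∞) η) (h2 : tsupport η ⊆ ball 0 R) (hApos : 0 < A)
    (hA : ∀ z, |η z| ≤ A) (hB : ∀ z, ‖fderiv ℝ η z‖ ≤ B) (hη1 : ∫ z, η z = 1)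
    (hM : miyachiMax n Ω f x ≠ ⊤)
    (hL : Filter.Tendsto (fun r : ℝ => ⨍ y in closedBall x r, ‖f y - f x‖)
      (nhdsWithin 0 (Ioi 0)) (nhds 0)) :
    |(∫ z in Ω, f z * η (z - x)) - f x| ≤
      n * (R ^ (n + 1) * (A + R * B)) * (miyachiMax n Ω f x).toReal := by
  have hB0 : 0 ≤ B := (norm_nonneg _).trans (hB 0)
  set M := (miyachiMax n Ω f x).toReal with hMdef
  have hM0 : 0 ≤ M := ENNReal.toReal_nonneg
  set Q := R ^ (n + 1) * (A + R * B) with hQ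
  have hQ0 : 0 < Q := by positivity
  set G : ℝ → ℝ := fun u => ∫ z in Ω, f z * (u ^ n * η (u • (z - x))) with hG
  set G' : ℝ → ℝ := fun u => u⁻¹ * ∑ j, ∫ z in Ω, f z * pderivIdx n j (PhiAux n x η j u) z with hG'
  have hGd : ∀ u, 1 ≤ u → HasDerivAt G (G' u) u := fun u hu =>
    G_hasDerivAt n Ω hΩ f hf x hx η R A B hR hRd h1 h2 hA hB u hu
  have hGb : ∀ u, 1 ≤ u → |G' u| ≤ u⁻¹ * (n * (u⁻¹ * Q * M)) := by
    intro u hu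
    have hu0 : 0 < u := by linarith
    rw [hG']
    simp only [abs_mul, abs_of_pos (inv_pos.2 hu0)]
    gcongr
    refine (Finset.abs_sum_le_sum_abs _ _).trans ?_
    refine (Finset.sum_le_card_nsmul _ _ (u⁻¹ * Q * M) ?_).trans (by simp)
    intro j _
    obtain ⟨b1, b2⟩ := PhiAux_bounds n x η j u R A B hu0 hR h1 h2 hA hB
    refine miyachi_scaled n Ω j f _ x (u⁻¹ * R) (u⁻¹ * Q) (by positivity) ?_ (by positivity)
      (PhiAux_contDiff n x η j u h1) (PhiAux_tsupport n x η j u R hu0 h2) b1 b2 hM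
    refine le_trans ?_ hRd
    have : u⁻¹ ≤ 1 := inv_le_one_of_one_le₀ hu
    nlinarith
  have hmvt : ∀ s ∈ Ioc (0 : ℝ) 1, |G 1 - G s⁻¹| ≤ n * Q * M := by
    intro s hs
    have h := Convex.norm_image_sub_le_of_norm_hasDerivWithin_le (f := fun s : ℝ => G s⁻¹)
      (f' := fun s => G' s⁻¹ * (-(s ^ 2)⁻¹)) (C := n * Q * M) (s := Ioc (0 : ℝ) 1) (x := s)
      (y := 1) ?_ ?_ (convex_Ioc 0 1) hs ⟨one_pos, le_rfl⟩
    · simp only [inv_one, Real.norm_eq_abs] at h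
      refine h.trans ?_
      have : |1 - s| ≤ 1 := by rw [abs_le]; constructor <;> linarith [hs.1, hs.2]
      exact mul_le_of_le_one_right (by positivity) this
    · intro t ht
      have h3 : 1 ≤ t⁻¹ := (one_le_inv₀ ht.1).2 ht.2
      exact ((hGd _ h3).comp t (hasDerivAt_inv ht.1.ne')).hasDerivWithinAt
    · intro t ht
      have ht0 := ht.1
      have h3 : 1 ≤ t⁻¹ := (one_le_inv₀ ht.1).2 ht.2
      have h4 := hGb _ h3
      rw [inv_inv] at h4
      rw [Real.norm_eq_abs, abs_mul, abs_neg, abs_of_pos (by positivity : 0 < (t ^ 2)⁻¹)]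
      calc |G' t⁻¹| * (t ^ 2)⁻¹ ≤ (t * (n * (t * Q * M))) * (t ^ 2)⁻¹ := by gcongr
        _ = n * Q * M := by field_simp
  set ω := volume.real (ball (0 : EuclideanSpace ℝ (Fin n)) 1) with hω
  have hlim : ∀ s ∈ Ioc (0 : ℝ) 1, |G s⁻¹ - f x| ≤
      A * R ^ n * ω * ⨍ y in closedBall x (s * R), ‖f y - f x‖ := by
    intro s hs
    have hs0 := hs.1
    set u := s⁻¹ with hu
    have hu0 : 0 < u := inv_pos.2 hs0
    set K := closedBall x (s * R) with hK
    have hKc : IsCompact K := isCompact_closedBall _ _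
    have hKΩ : K ⊆ Ω := by
      refine Subset.trans ?_ (ball_infDist_frontier_subset n Ω hΩ x hx (by linarith))
      refine closedBall_subset_ball ?_
      have : s * R ≤ R := by nlinarith [hs.2]
      linarith
    set k : EuclideanSpace ℝ (Fin n) → ℝ := fun z => u ^ n * η (u • (z - x)) with hk
    have hkc : Continuous k := by
      have := h1.continuous
      rw [hk]; fun_prop
    have hk0 : ∀ z ∉ K, k z = 0 := by
      intro z hz
      have : u • (z - x) ∉ tsupport η := by
        intro h
        have := h2 h
        rw [mem_ball_zero_iff, norm_smul, Real.norm_of_nonneg hu0.le, hu, inv_mul_eq_div,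
          div_lt_iff₀ hs0] at this
        apply hz
        rw [hK, mem_closedBall, dist_eq_norm]
        linarith
      rw [hk]
      simp only [image_eq_zero_of_notMem_tsupport this, mul_zero]
    have hkb : ∀ z, |k z| ≤ u ^ n * A := by
      intro z
      rw [hk]
      simp only [abs_mul, abs_of_pos (pow_pos hu0 n)]
      gcongr
      exact hA _
    have hki : ∫ z, k z = 1 := by
      rw [hk, integral_const_mul, integral_sub_right_eq_self (fun z => η (u • z)) x,
        Measure.integral_comp_smul, hη1]
      simp only [finrank_euclideanSpace, Fintype.card_fin, smul_eq_mul, mul_one]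
      rw [abs_of_pos (by positivity)]
      field_simp
    have hki' : Integrable k :=
      hkc.integrable_of_hasCompactSupport (HasCompactSupport.intro hKc hk0)
    have hfk : Integrable (fun z => f z * k z) := integrable_mul_cpt n Ω f k hf K hKc hKΩ hkc hk0
    have e1 : G u = ∫ z, f z * k z := by
      apply setIntegral_eq_integral_of_forall_compl_eq_zero
      intro z hz
      have := hk0 z (fun h => hz (hKΩ h))
      rw [hk] at this
      simp only at this
      rw [this, mul_zero]
    have e2 : G u - f x = ∫ z in K, (f z - f x) * k z := by
      rw [setIntegral_eq_integral_of_forall_compl_eq_zero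
        (fun z hz => by rw [hk0 z hz, mul_zero])]
      simp only [sub_mul]
      rw [integral_sub hfk (hki'.const_mul _), integral_const_mul, hki, mul_one, e1]
    have hfK : IntegrableOn f K := hf.integrableOn_compact_subset hKΩ hKc
    have hfK2 : IntegrableOn (fun z => ‖f z - f x‖) K :=
      (hfK.sub (integrableOn_const hKc.measure_lt_top.ne)).norm
    have hvol : volume.real K = (s * R) ^ n * ω := by
      rw [hK, hω, measureReal_def, Measure.addHaar_closedBall _ _ (by positivity)]
      simp [measureReal_def, ENNReal.toReal_ofReal (by positivity : 0 ≤ (s * R) ^ n)]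
    have hω0 : 0 < ω := by
      rw [hω, measureReal_def]
      exact ENNReal.toReal_pos (measure_ball_pos _ _ one_pos).ne' measure_ball_lt_top.ne
    have hvpos : 0 < volume.real K := by rw [hvol]; positivity
    rw [e2, ← Real.norm_eq_abs]
    refine (norm_integral_le_of_norm_le (hfK2.const_mul (u ^ n * A)) ?_).trans ?_
    · refine Filter.Eventually.of_forall fun z => ?_
      rw [norm_mul, mul_comm]
      gcongr
      exact hkb z
    · rw [integral_const_mul, setAverage_eq, smul_eq_mul, hvol, hu]
      apply le_of_eq
      rw [inv_pow, mul_pow]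
      field_simp
  have hT : Filter.Tendsto (fun s : ℝ => n * Q * M +
      A * R ^ n * ω * ⨍ y in closedBall x (s * R), ‖f y - f x‖)
      (nhdsWithin 0 (Ioi 0)) (nhds (n * Q * M + A * R ^ n * ω * 0)) := by
    refine Filter.Tendsto.const_add _ (Filter.Tendsto.const_mul _ (hL.comp ?_))
    refine tendsto_nhdsWithin_iff.2 ⟨?_, ?_⟩
    · have : Filter.Tendsto (fun s : ℝ => s * R) (nhds 0) (nhds (0 * R)) :=
        (continuous_id.mul continuous_const).tendsto 0
      rw [zero_mul] at this
      exact this.mono_left nhdsWithin_le_nhds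
    · filter_upwards [self_mem_nhdsWithin] with s hs
      exact mul_pos hs hR
  rw [mul_zero, add_zero] at hT
  refine ge_of_tendsto hT ?_
  have hIoc : Ioc (0 : ℝ) 1 ∈ nhdsWithin (0 : ℝ) (Ioi 0) := Ioc_mem_nhdsGT one_pos
  filter_upwards [hIoc] with s hs
  have hG1 : (∫ z in Ω, f z * η (z - x)) = G 1 := by simp [hG]
  rw [hG1]
  calc |G 1 - f x| = |(G 1 - G s⁻¹) + (G s⁻¹ - f x)| := by ring_nf
    _ ≤ _ := (abs_add_le _ _).trans (add_le_add (hmvt s hs) (hlim s hs))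

lemma lebesgue_points (n : ℕ) (Ω : Set (EuclideanSpace ℝ (Fin n))) (hΩ : IsOpen Ω)
    (f : EuclideanSpace ℝ (Fin n) → ℝ) (hf : LocallyIntegrableOn f Ω) :
    ∃ E : Set (EuclideanSpace ℝ (Fin n)), volume E = 0 ∧ ∀ x ∈ Ω \ E,
      Filter.Tendsto (fun r : ℝ => ⨍ y in closedBall x r, ‖f y - f x‖)
      (nhdsWithin 0 (Ioi 0)) (nhds 0) := by
  set E : Set (EuclideanSpace ℝ (Fin n)) := {x ∈ Ω | ¬ Filter.Tendsto
    (fun r : ℝ => ⨍ y in closedBall x r, ‖f y - f x‖) (nhdsWithin 0 (Ioi 0)) (nhds 0)} with hE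
  refine ⟨E, ?_, ?_⟩
  · apply measure_null_of_locally_null
    intro x hx
    obtain ⟨ε, hε, hεΩ⟩ := Metric.nhds_basis_closedBall.mem_iff.1 (hΩ.mem_nhds hx.1)
    set g := (closedBall x ε).indicator f with hg
    have hgi : Integrable g := (integrable_indicator_iff measurableSet_closedBall).2
      (hf.integrableOn_compact_subset hεΩ (isCompact_closedBall _ _))
    have hae := IsUnifLocDoublingMeasure.ae_tendsto_average_norm_sub
      (volume : Measure (EuclideanSpace ℝ (Fin n))) hgi.locallyIntegrable 1
    refine ⟨ball x ε ∩ E, Filter.inter_mem (mem_nhdsWithin_of_mem_nhds (ball_mem_nhds x hε))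
      self_mem_nhdsWithin, ?_⟩
    refine measure_mono_null ?_ (ae_iff.1 hae)
    rintro y ⟨hy, hyE⟩ hlp
    apply hyE.2
    have h1 := hlp (l := nhdsWithin (0 : ℝ) (Ioi 0)) (fun _ => y) (fun r => r) Filter.tendsto_id
      (by
        filter_upwards [self_mem_nhdsWithin] with r hr
        simpa using (mem_Ioi.1 hr).le)
    refine h1.congr' ?_
    have hlt : 0 < ε - dist y x := by rw [mem_ball] at hy; linarith
    filter_upwards [Ioc_mem_nhdsGT hlt] with r hr
    apply setAverage_congr_fun measurableSet_closedBall
    refine Filter.Eventually.of_forall fun z hz => ?_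
    have hz' : z ∈ closedBall x ε := by
      rw [mem_closedBall] at *
      linarith [dist_triangle z y x, hr.2]
    simp only [hg, indicator_of_mem hz', indicator_of_mem (ball_subset_closedBall hy)]
  · intro x hx
    by_contra h
    exact hx.2 ⟨hx.1, h⟩

lemma part_two (n : ℕ) : ∃ C : ℝ, 0 ≤ C ∧
    ∀ Ω : Set (EuclideanSpace ℝ (Fin n)), IsOpen Ω →
    ∀ f : EuclideanSpace ℝ (Fin n) → ℝ, LocallyIntegrableOn f Ω →
    ∃ E : Set (EuclideanSpace ℝ (Fin n)), volume E = 0 ∧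
      ∀ x ∈ Ω \ E, ∀ y ∈ Ω \ E, x ≠ y →
        ‖x - y‖ ≤ (1 / 4) * min (infDist x (frontier Ω)) (infDist y (frontier Ω)) →
        miyachiMax n Ω f x ≠ ⊤ → miyachiMax n Ω f y ≠ ⊤ →
        |f x - f y| ≤ ‖x - y‖ *
          (C * ((miyachiMax n Ω f x).toReal + (miyachiMax n Ω f y).toReal)) := by
  set b : ContDiffBump (0 : EuclideanSpace ℝ (Fin n)) :=
    ⟨1 / 2, 1, by norm_num, by norm_num⟩ with hb
  set ψ : EuclideanSpace ℝ (Fin n) → ℝ := b.normed volume with hψ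
  have hψs : ContDiff ℝ (⊤ : ℕ∞) ψ := b.contDiff_normed
  have hψi : ∫ z, ψ z = 1 := b.integral_normed
  have hψt : tsupport ψ = closedBall 0 1 := b.tsupport_normed_eq
  have hψc : HasCompactSupport ψ := b.hasCompactSupport_normed
  obtain ⟨c0, hc0⟩ := hψs.continuous.bounded_above_of_compact_support hψc
  obtain ⟨c1, hc1⟩ := (hψs.continuous_fderiv (by simp)).bounded_above_of_compact_support
    (hψc.fderiv (𝕜 := ℝ))
  have hc1' : 0 ≤ c1 := (norm_nonneg _).trans (hc1 0)
  have hc0' : 0 ≤ c0 := (norm_nonneg _).trans (hc0 0)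
  refine ⟨n * (2 ^ (n + 1) * ((c0 + 1) + 2 * c1)), by positivity, ?_⟩
  intro Ω hΩ f hf
  obtain ⟨E, hE0, hE⟩ := lebesgue_points n Ω hΩ f hf
  refine ⟨E, hE0, ?_⟩
  intro x hx y hy hxy hd hMx hMy
  set T := ‖x - y‖ with hT
  have hT0 : 0 < T := norm_pos_iff.2 (sub_ne_zero.2 hxy)
  set m : EuclideanSpace ℝ (Fin n) := (1 / 2 : ℝ) • (x + y) with hm
  have main : ∀ w ∈ Ω \ E, T ≤ (1 / 4) * infDist w (frontier Ω) → ‖m - w‖ = T / 2 →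
      miyachiMax n Ω f w ≠ ⊤ →
      |(∫ z in Ω, f z * ((T⁻¹) ^ n * ψ (T⁻¹ • (z - m)))) - f w| ≤
        n * (2 ^ (n + 1) * ((c0 + 1) + 2 * c1)) * T * (miyachiMax n Ω f w).toReal := by
    intro w hw hTw hmw hMw
    set v := m - w with hv
    have hTi : 0 < T⁻¹ := inv_pos.2 hT0
    have h := core_bound n Ω hΩ f hf w hw.1 (fun z => (T⁻¹) ^ n * ψ (T⁻¹ • (z - v)))
      (2 * T) ((T⁻¹) ^ n * (c0 + 1)) ((T⁻¹) ^ (n + 1) * c1) (by positivity) (by linarith)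
      (by fun_prop) ?_ (by positivity) ?_ ?_ ?_ hMw (hE w hw)
    · have e1 : ∀ z, z - w - v = z - m := by intro z; rw [hv]; abel
      simp only [e1] at h
      refine h.trans (le_of_eq ?_)
      congr 1
      rw [mul_pow, inv_pow, inv_pow]
      field_simp
      ring
    · have hsub : tsupport (fun z => (T⁻¹) ^ n * ψ (T⁻¹ • (z - v))) ⊆
          (fun z => T⁻¹ • (z - v)) ⁻¹' (tsupport ψ) := by
        apply closure_minimal
        · intro z hz
          apply subset_tsupport
          intro h
          exact hz (by simp [h])
        · exact (isClosed_tsupport ψ).preimage (by fun_prop)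
      intro z hz
      have h3 := hsub hz
      rw [mem_preimage, hψt, mem_closedBall_zero_iff, norm_smul, Real.norm_of_nonneg hTi.le,
        inv_mul_le_iff₀ hT0, mul_one] at h3
      rw [mem_ball_zero_iff]
      calc ‖z‖ = ‖(z - v) + v‖ := by rw [sub_add_cancel]
        _ ≤ T + T / 2 := (norm_add_le _ _).trans (by rw [hmw]; linarith)
        _ < 2 * T := by linarith
    · intro z
      rw [abs_mul, abs_of_pos (by positivity)]
      gcongr
      have := hc0 (T⁻¹ • (z - v))
      rw [Real.norm_eq_abs] at this
      linarith
    · intro z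
      have hη : HasFDerivAt ψ (fderiv ℝ ψ (T⁻¹ • (z - v))) (T⁻¹ • (z - v)) :=
        (hψs.differentiable (by simp)).differentiableAt.hasFDerivAt
      have ha : HasFDerivAt (fun z : EuclideanSpace ℝ (Fin n) => z - v)
        (ContinuousLinearMap.id ℝ _) z := (hasFDerivAt_id z).sub_const v
      have hc := (hη.comp z (ha.const_smul T⁻¹)).const_mul ((T⁻¹) ^ n)
      have hc' : HasFDerivAt (fun z => (T⁻¹) ^ n * ψ (T⁻¹ • (z - v))) _ z := hc
      rw [hc'.fderiv, ContinuousLinearMap.comp_smul, ContinuousLinearMap.comp_id, norm_smul,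
        norm_smul, Real.norm_of_nonneg (by positivity), Real.norm_of_nonneg hTi.le, pow_succ,
        mul_assoc]
      gcongr
      exact hc1 _
    · rw [integral_const_mul, integral_sub_right_eq_self (fun z => ψ (T⁻¹ • z)) v,
        Measure.integral_comp_smul, hψi]
      simp only [finrank_euclideanSpace, Fintype.card_fin, smul_eq_mul, mul_one]
      rw [abs_of_pos (by positivity)]
      field_simp
  have hx' := main x hx (hd.trans (by gcongr; exact min_le_left _ _)) (by
    have : m - x = (-(1 / 2) : ℝ) • (x - y) := by rw [hm]; module
    rw [this, norm_smul, ← hT]; norm_num; ring) hMx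
  have hy' := main y hy (hd.trans (by gcongr; exact min_le_right _ _)) (by
    have : m - y = (1 / 2 : ℝ) • (x - y) := by rw [hm]; module
    rw [this, norm_smul, ← hT]; norm_num; ring) hMy
  rw [abs_le] at hx' hy' ⊢
  constructor <;> nlinarith [hx'.1, hx'.2, hy'.1, hy'.2]

/-- **Theorem 3.4.** For a domain `Ω ⊆ ℝⁿ` and `n/(n+1) < p ≤ 1`:
`H^{1,p}(Ω) = M^{1,p}_{ball}(Ω)`. (i) If `g ∈ L^p(Ω)` is a ball-Hajlasz gradient of `f`
then `‖𝔐_Ω f‖_{L^p(Ω)} ≤ C ‖g‖_{L^p(Ω)}`; (ii) if `𝔐_Ω f ∈ L^p(Ω)` then `C · 𝔐_Ω f`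
is a ball-Hajlasz gradient of `f` on `Ω`. The constant `C = C(n,p)` is independent of
the domain. -/
theorem hardy_sobolev_on_domain_eq_ball_hajlasz
    (n : ℕ) (hn : 1 ≤ n) (p : ℝ) (hp1 : (n : ℝ) / (n + 1) < p) (hp2 : p ≤ 1) :
    ∃ C : ℝ≥0∞, 1 ≤ C ∧ C ≠ ⊤ ∧
      ∀ Ω : Set (EuclideanSpace ℝ (Fin n)), IsOpen Ω → IsConnected Ω → Ω ≠ univ →
      ∀ f : EuclideanSpace ℝ (Fin n) → ℝ, LocallyIntegrableOn f Ω →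
        ((∀ g : EuclideanSpace ℝ (Fin n) → ℝ, IsBallHajlaszGradientOn n f g Ω →
            (∫⁻ x in Ω, miyachiMax n Ω f x ^ p) ^ (1 / p) ≤
              C * lpNorm n p g (volume.restrict Ω)) ∧
          ((∫⁻ x in Ω, miyachiMax n Ω f x ^ p) ^ (1 / p) ≠ ⊤ →
            ∃ E : Set (EuclideanSpace ℝ (Fin n)), volume E = 0 ∧
              ∀ x ∈ Ω \ E, ∀ y ∈ Ω \ E,
                ‖x - y‖ ≤ (1 / 4) * min (infDist x (frontier Ω))
                    (infDist y (frontier Ω)) →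
                ENNReal.ofReal |f x - f y| ≤
                  ENNReal.ofReal ‖x - y‖ *
                    (C * miyachiMax n Ω f x + C * miyachiMax n Ω f y))) := by
  obtain ⟨C1, hC1, H1⟩ := part_one n hn p hp1 hp2
  obtain ⟨C2, hC2, H2⟩ := part_two n
  refine ⟨1 + C1 + ENNReal.ofReal C2, ?_, ?_, ?_⟩
  · rw [add_assoc]; exact le_self_add
  · simp [hC1]
  intro Ω hΩ hΩc hΩu f hf
  refine ⟨?_, ?_⟩
  · intro g hg
    refine (H1 Ω hΩ f g hg).trans ?_
    unfold _root_.lpNorm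
    gcongr
    rw [add_comm 1 C1, add_assoc]
    exact le_self_add
  · intro _
    obtain ⟨E, hE0, hE⟩ := H2 Ω hΩ f hf
    refine ⟨E, hE0, ?_⟩
    intro x hx y hy hd
    by_cases hxy : x = y
    · simp [hxy]
    have hT0 : 0 < ‖x - y‖ := norm_pos_iff.2 (sub_ne_zero.2 hxy)
    have hT : ENNReal.ofReal ‖x - y‖ ≠ 0 := by simpa using sub_ne_zero.2 hxy
    have hC0 : 1 + C1 + ENNReal.ofReal C2 ≠ 0 := by simp
    by_cases hMx : miyachiMax n Ω f x = ⊤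
    · rw [hMx, ENNReal.mul_top hC0, top_add, ENNReal.mul_top hT]
      exact le_top
    by_cases hMy : miyachiMax n Ω f y = ⊤
    · rw [hMy, ENNReal.mul_top hC0, add_top, ENNReal.mul_top hT]
      exact le_top
    refine (ENNReal.ofReal_le_ofReal (hE x hx y hy hxy hd hMx hMy)).trans ?_
    rw [ENNReal.ofReal_mul hT0.le, ENNReal.ofReal_mul hC2,
      ENNReal.ofReal_add ENNReal.toReal_nonneg ENNReal.toReal_nonneg,
      ENNReal.ofReal_toReal hMx, ENNReal.ofReal_toReal hMy, ← mul_add]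
    gcongr
    exact le_add_self
end
end

section
/- Let n ≥ 1, n/(n+1) < p ≤ 1, c ≥ 1, and let Ω ⊆ ℝⁿ be a bounded c-uniform domain. There is a constant C = C(n,p,Ω) such that for every f ∈ L^p(Ω) possessing a Hajlasz gradient g ∈ L^p(Ω) on Ω, there exist a function F : ℝⁿ → ℝ and G ∈ L^p(ℝⁿ) such that F = f almost everywhere on Ω, F ∈ L^p(ℝⁿ), G is a Hajlasz gradient of F on ℝⁿ, and ‖F‖_{L^p(ℝⁿ)} + ‖G‖_{L^p(ℝⁿ)} ≤ C·(‖f‖_{L^p(Ω)} + ‖g‖_{L^p(Ω)}). In particular every element of M^{1,p}(Ω) is the restriction to Ω of an element of M^{1,p}(ℝⁿ) = H^{1,p}(ℝⁿ). -/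
open MeasureTheory Metric Set ENNReal NNReal

noncomputable section

/-- `g` is a Hajlasz gradient of `u` on `U ⊆ ℝⁿ`: `g` is measurable, nonnegative, and
off a set of measure zero `|u x - u y| ≤ ‖x - y‖ (g x + g y)` for `x, y ∈ U`. -/
def IsHajlaszGradientOn (n : ℕ) (u g : EuclideanSpace ℝ (Fin n) → ℝ)
    (U : Set (EuclideanSpace ℝ (Fin n))) : Prop :=
  Measurable g ∧ (∀ x, 0 ≤ g x) ∧
    ∃ E : Set (EuclideanSpace ℝ (Fin n)), MeasureTheory.volume E = 0 ∧
      ∀ x ∈ U \ E, ∀ y ∈ U \ E, |u x - u y| ≤ ‖x - y‖ * (g x + g y)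

/-- `Ω` is a `c`-uniform domain: it is open and connected, and every pair of points is
joined by a `1`-Lipschitz curve `γ : [0,T] → Ω` with `T ≤ c ‖x - y‖` and
`B(γ(t), min(t, T-t)/c) ⊆ Ω` for `t ∈ (0,T)`. -/
def IsUniformDomain (n : ℕ) (c : ℝ) (Ω : Set (EuclideanSpace ℝ (Fin n))) : Prop :=
  IsOpen Ω ∧ IsConnected Ω ∧
    ∀ x ∈ Ω, ∀ y ∈ Ω, ∃ (T : ℝ) (γ : ℝ → EuclideanSpace ℝ (Fin n)),
      0 ≤ T ∧ T ≤ c * ‖x - y‖ ∧ LipschitzOnWith 1 γ (Icc 0 T) ∧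
      γ 0 = x ∧ γ T = y ∧ (∀ t ∈ Icc (0 : ℝ) T, γ t ∈ Ω) ∧
      ∀ t ∈ Ioo (0 : ℝ) T, ball (γ t) (min t (T - t) / c) ⊆ Ω


/-- The Euclidean space. -/
abbrev Eu (n : ℕ) := EuclideanSpace ℝ (Fin n)

lemma corkscrew (n : ℕ) (hn : 1 ≤ n) (c : ℝ) (hc : 1 ≤ c) (Ω : Set (Eu n))
    (hΩ : IsUniformDomain n c Ω) :
    ∃ δ : ℝ, 0 < δ ∧ ∀ (x : Eu n) (s : ℝ), 0 < s → s < δ → infDist x Ω ≤ s →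
      ∃ w ∈ Ω, dist x w ≤ 3 * s ∧ ball w (s / c) ⊆ Ω := by
  obtain ⟨ho, hcon, hcurve⟩ := hΩ
  obtain ⟨a, ha⟩ := hcon.nonempty
  have : Nonempty (Fin n) := ⟨⟨0, hn⟩⟩
  have : Nontrivial (Eu n) := inferInstance
  obtain ⟨b, hb, hba⟩ : ∃ b ∈ Ω, b ≠ a := by
    have hne : (nhdsWithin a {a}ᶜ).NeBot := inferInstance
    have h1 : ∀ᶠ b in nhdsWithin a {a}ᶜ, b ∈ Ω :=
      mem_nhdsWithin_of_mem_nhds (ho.mem_nhds ha)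
    have h2 : ∀ᶠ b in nhdsWithin a {a}ᶜ, b ∈ ({a}ᶜ : Set (Eu n)) := self_mem_nhdsWithin
    obtain ⟨b, hb, hb2⟩ := (h1.and h2).exists
    exact ⟨b, hb, hb2⟩
  have hab : 0 < dist a b := dist_pos.mpr hba.symm
  refine ⟨dist a b / 4, by positivity, ?_⟩
  intro x s hs hsδ hx
  obtain ⟨y, hy, hxy⟩ := (infDist_lt_iff (x := x) (r := 2 * s) hcon.nonempty).1 (by linarith)
  obtain ⟨v, hv, hvy⟩ : ∃ v ∈ Ω, dist a b / 2 ≤ dist y v := by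
    by_cases h : dist a b / 2 ≤ dist y a
    · exact ⟨a, ha, h⟩
    · refine ⟨b, hb, ?_⟩
      have := dist_triangle a y b
      rw [dist_comm a y] at this
      push Not at h
      linarith
  obtain ⟨T, γ, hT0, hT, hL, h0, h1, hin, hball⟩ := hcurve y hy v hv
  have hTd : dist y v ≤ T := by
    have := hL.dist_le_mul 0 ⟨le_rfl, hT0⟩ T ⟨hT0, le_rfl⟩
    rw [h0, h1, Real.dist_eq] at this
    simpa [abs_of_nonneg hT0] using this
  have hmem : s ∈ Icc (0:ℝ) T := ⟨hs.le, by linarith⟩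
  refine ⟨γ s, hin s hmem, ?_, ?_⟩
  · have := hL.dist_le_mul 0 ⟨le_rfl, hT0⟩ s hmem
    rw [h0, Real.dist_eq] at this
    simp only [NNReal.coe_one, zero_sub, abs_neg, abs_of_pos hs, one_mul] at this
    linarith [dist_triangle x y (γ s)]
  · have := hball s ⟨hs, by linarith⟩
    rwa [min_eq_left (by linarith)] at this

lemma frontier_null (n : ℕ) (hn : 1 ≤ n) (c : ℝ) (hc : 1 ≤ c) (Ω : Set (Eu n))
    (hΩ : IsUniformDomain n c Ω) : volume (frontier Ω) = 0 := by
  obtain ⟨δ, hδ, hcork⟩ := corkscrew n hn c hc Ω hΩ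
  have : Nonempty (Fin n) := ⟨⟨0, hn⟩⟩
  have hdens := Besicovitch.ae_tendsto_measure_inter_div (volume : Measure (Eu n)) (frontier Ω)
  have hmeas : MeasurableSet (frontier Ω) := isClosed_frontier.measurableSet
  rw [ae_restrict_iff' hmeas] at hdens
  have hq : (0:ℝ) < (1 / (4 * c)) ^ n := by positivity
  have hfalse : ∀ᵐ x ∂(volume : Measure (Eu n)), x ∉ frontier Ω := by
    filter_upwards [hdens] with x hx hxf
    have ht := hx hxf
    have hlt : ENNReal.ofReal (1 - (1 / (4 * c)) ^ n) < 1 := by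
      rw [ENNReal.ofReal_lt_one]; linarith
    have hev := ht.eventually (lt_mem_nhds hlt)
    have hev2 : ∀ᶠ r : ℝ in nhdsWithin 0 (Ioi 0), r ∈ Ioo (0:ℝ) δ :=
      Ioo_mem_nhdsGT hδ
    obtain ⟨r, hr1, hr0, hrδ⟩ := (hev.and hev2).exists
    have hxinf : infDist x Ω = 0 :=
      (mem_closure_iff_infDist_zero hΩ.2.1.nonempty).1 (frontier_subset_closure hxf)
    obtain ⟨w, hw, hxw, hbw⟩ := hcork x (r / 4) (by positivity) (by linarith)
      (by rw [hxinf]; positivity)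
    have hκ : volume (ball (0 : Eu n) 1) ≠ ⊤ := measure_ball_lt_top.ne
    have hκ0 : volume (ball (0 : Eu n) 1) ≠ 0 := (measure_ball_pos _ _ one_pos).ne'
    have hr4 : r / 4 / c ≤ r / 4 := div_le_self (by positivity) hc
    have hsub : ball w (r / 4 / c) ⊆ closedBall x r := by
      intro y hy
      rw [mem_ball] at hy
      rw [mem_closedBall]
      have := dist_triangle y w x
      rw [dist_comm w x] at this
      linarith
    have hsub2 : frontier Ω ∩ closedBall x r ⊆ closedBall x r \ ball w (r / 4 / c) := by
      rintro y ⟨hy1, hy2⟩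
      refine ⟨hy2, fun hy3 => ?_⟩
      have : y ∈ interior Ω := by rw [hΩ.1.interior_eq]; exact hbw hy3
      exact hy1.2 this
    have hmeasle : volume (frontier Ω ∩ closedBall x r) ≤
        ENNReal.ofReal (1 - (1 / (4 * c)) ^ n) * volume (closedBall x r) := by
      refine (measure_mono hsub2).trans ?_
      rw [measure_sdiff hsub measurableSet_ball.nullMeasurableSet measure_ball_lt_top.ne]
      rw [Measure.addHaar_closedBall volume x hr0.le,
        Measure.addHaar_ball volume w (r := r / 4 / c) (by positivity)]
      rw [finrank_euclideanSpace_fin, ← mul_assoc, ← ENNReal.ofReal_mul' (by positivity)]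
      rw [← ENNReal.sub_mul (by intros; exact hκ), ← ENNReal.ofReal_sub _ (by positivity)]
      gcongr
      have : r / 4 / c = (1 / (4 * c)) * r := by field_simp
      rw [this, mul_pow]
      linarith
    have hb0 : volume (closedBall x r) ≠ 0 := (measure_closedBall_pos _ _ hr0).ne'
    have hb1 : volume (closedBall x r) ≠ ⊤ := measure_closedBall_lt_top.ne
    have := ENNReal.div_le_of_le_mul hmeasle
    exact absurd hr1 (not_lt.mpr this)
  have := measure_eq_zero_iff_ae_notMem.2 hfalse
  exact this

lemma whitney (n : ℕ) (hn : 1 ≤ n) (c : ℝ) (hc : 1 ≤ c) (Ω : Set (Eu n))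
    (hΩ : IsUniformDomain n c Ω) (hΩb : Bornology.IsBounded Ω) :
    ∃ (δ : ℝ) (u : Set (Eu n)), 0 < δ ∧ u.Countable ∧ u ⊆ Ω ∧
      u.PairwiseDisjoint (fun w => closedBall w (infDist w Ωᶜ / 10)) ∧
      ∀ x, 0 < infDist x Ω → infDist x Ω < δ → ∃ w ∈ u, dist x w ≤ 6 * infDist x Ω ∧
        2 * infDist x Ω ≤ 3 * c * infDist w Ωᶜ := by
  obtain ⟨δ, hδ, hcork⟩ := corkscrew n hn c hc Ω hΩ
  have : Nonempty (Fin n) := ⟨⟨0, hn⟩⟩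
  have hcne : (Ωᶜ).Nonempty := by
    rw [nonempty_compl]
    rintro rfl
    exact NormedSpace.unbounded_univ ℝ (Eu n) hΩb
  obtain ⟨a, ha⟩ := hcne
  obtain ⟨R, hR⟩ := hΩb.subset_closedBall a
  obtain ⟨u, huΩ, hdisj, hcov⟩ :=
    Vitali.exists_disjoint_subfamily_covering_enlargement_closedBall Ω (fun w : Eu n => w)
      (fun w => infDist w Ωᶜ / 10) R (by
        intro w hw
        have h1 := infDist_le_dist_of_mem (x := w) ha
        have h2 := hR hw
        rw [mem_closedBall] at h2
        have := infDist_nonneg (x := w) (s := Ωᶜ)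
        linarith) 5 (by norm_num)
  have hpos : ∀ w ∈ Ω, 0 < infDist w Ωᶜ := by
    intro w hw
    exact (hΩ.1.isClosed_compl.notMem_iff_infDist_pos ⟨a, ha⟩).1 (by simpa using hw)
  refine ⟨δ, u, hδ, ?_, huΩ, hdisj, ?_⟩
  · refine hdisj.countable_of_nonempty_interior ?_
    intro w hw
    refine ⟨w, ball_subset_interior_closedBall (mem_ball_self ?_)⟩
    have := hpos w (huΩ hw)
    positivity
  · intro x hx0 hxδ
    obtain ⟨w, hw, hxw, hbw⟩ := hcork x _ hx0 hxδ le_rfl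
    obtain ⟨v, hv, hsub⟩ := hcov w hw
    have hwv : dist w v ≤ 5 * (infDist v Ωᶜ / 10) := by
      have := hsub (mem_closedBall_self (by have := hpos w hw; positivity))
      simpa using this
    have hxΩ : x ∈ Ωᶜ := by
      intro h
      rw [infDist_zero_of_mem h] at hx0
      exact lt_irrefl _ hx0
    have h1 : infDist w Ωᶜ ≤ dist w x := infDist_le_dist_of_mem hxΩ
    have h2 : infDist x Ω / c ≤ infDist w Ωᶜ := by
      rw [le_infDist ⟨a, ha⟩]
      intro y hy
      by_contra hlt
      push Not at hlt
      exact hy (hbw (by rw [mem_ball, dist_comm]; exact hlt))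
    have h3 : infDist w Ωᶜ ≤ infDist v Ωᶜ + dist w v := infDist_le_infDist_add_dist
    have h4 : infDist v Ωᶜ ≤ infDist w Ωᶜ + dist v w := infDist_le_infDist_add_dist
    rw [dist_comm v w] at h4
    rw [dist_comm w x] at h1
    refine ⟨v, hv, ?_, ?_⟩
    · linarith [dist_triangle x w v]
    · rw [div_le_iff₀ (by linarith)] at h2
      nlinarith

lemma packing (n : ℕ) {ι : Type} (w : ι → Eu n) (d : ι → ℝ) (hd : ∀ i, 0 ≤ d i)
    (hdisj : ∀ i j, i ≠ j → Disjoint (closedBall (w i) (d i / 10)) (closedBall (w j) (d j / 10)))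
    (S : Finset ι) (x : Eu n) (R : ℝ) (hR : 0 ≤ R)
    (hsub : ∀ i ∈ S, closedBall (w i) (d i / 10) ⊆ closedBall x R) :
    ∑ i ∈ S, d i ^ n ≤ (10 * R) ^ n := by
  have hκ : volume (ball (0 : Eu n) 1) ≠ ⊤ := measure_ball_lt_top.ne
  have hκ0 : volume (ball (0 : Eu n) 1) ≠ 0 := (measure_ball_pos _ _ one_pos).ne'
  have h1 : ∑ i ∈ S, volume (closedBall (w i) (d i / 10)) ≤ volume (closedBall x R) := by
    rw [← measure_biUnion_finset]
    · exact measure_mono (iUnion₂_subset hsub)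
    · intro i hi j hj hij
      exact hdisj i j hij
    · intro i _
      exact measurableSet_closedBall
  rw [Measure.addHaar_closedBall _ _ hR, finrank_euclideanSpace_fin] at h1
  have h2 : ∀ i ∈ S, volume (closedBall (w i) (d i / 10)) =
      ENNReal.ofReal ((d i / 10) ^ n) * volume (ball (0 : Eu n) 1) := by
    intro i hi
    rw [Measure.addHaar_closedBall _ _ (by have := hd i; positivity),
      finrank_euclideanSpace_fin]
  rw [Finset.sum_congr rfl h2, ← Finset.sum_mul, ENNReal.mul_le_mul_iff_left hκ0 hκ,
    ← ENNReal.ofReal_sum_of_nonneg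
      (fun i hi => by have := hd i; positivity),
    ENNReal.ofReal_le_ofReal_iff (by positivity)] at h1
  have h3 : ∑ i ∈ S, d i ^ n = 10 ^ n * ∑ i ∈ S, (d i / 10) ^ n := by
    rw [Finset.mul_sum]
    refine Finset.sum_congr rfl fun i _ => ?_
    rw [← mul_pow]; congr 1; ring
  rw [h3, mul_pow]
  gcongr

lemma avg_ge {ι : Type} (S : Finset ι) (q a : ι → ℝ) (hq : ∀ i ∈ S, 0 ≤ q i)
    (hpos : 0 < ∑ i ∈ S, q i) :
    ∃ i ∈ S, 0 < q i ∧ a i ≤ (∑ i ∈ S, q i * a i) / ∑ i ∈ S, q i := by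
  by_contra hcon
  push Not at hcon
  set m := (∑ i ∈ S, q i * a i) / ∑ i ∈ S, q i with hm
  obtain ⟨k, hk, hkpos⟩ : ∃ k ∈ S, 0 < q k := by
    by_contra h
    push Not at h
    exact absurd (Finset.sum_nonpos h) (not_le.mpr hpos)
  have h1 : ∑ i ∈ S, q i * m < ∑ i ∈ S, q i * a i := by
    refine Finset.sum_lt_sum ?_ ⟨k, hk, mul_lt_mul_of_pos_left (hcon k hk hkpos) hkpos⟩
    intro i hi
    rcases (hq i hi).eq_or_lt with h | h
    · rw [← h]; simp
    · exact (mul_lt_mul_of_pos_left (hcon i hi h) h).le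
  rw [← Finset.sum_mul, hm, mul_div_cancel₀ _ hpos.ne'] at h1
  exact lt_irrefl _ h1

lemma avg_le {ι : Type} (S : Finset ι) (q a : ι → ℝ) (hq : ∀ i ∈ S, 0 ≤ q i)
    (hpos : 0 < ∑ i ∈ S, q i) :
    ∃ i ∈ S, 0 < q i ∧ (∑ i ∈ S, q i * a i) / ∑ i ∈ S, q i ≤ a i := by
  obtain ⟨i, hi, h1, h2⟩ := avg_ge S q (fun i => - a i) hq hpos
  refine ⟨i, hi, h1, ?_⟩
  simp only [mul_neg, Finset.sum_neg_distrib, neg_div] at h2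
  linarith

lemma quot_est {ι : Type} (S : Finset ι) (q r a : ι → ℝ) (a0 M K : ℝ) (hM : 0 ≤ M)
    (hr : ∀ i ∈ S, 0 ≤ r i)
    (hq0 : 0 < ∑ i ∈ S, q i) (hr0 : 0 < ∑ i ∈ S, r i) (ha : ∀ i ∈ S, |a i - a0| ≤ M)
    (hqr : ∑ i ∈ S, |q i - r i| ≤ K * ∑ i ∈ S, q i) :
    |(∑ i ∈ S, q i * a i) / (∑ i ∈ S, q i) - (∑ i ∈ S, r i * a i) / (∑ i ∈ S, r i)|
      ≤ 2 * M * K := by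
  set D := ∑ i ∈ S, q i
  set D' := ∑ i ∈ S, r i
  have e1 : (∑ i ∈ S, q i * a i) = (∑ i ∈ S, q i * (a i - a0)) + D * a0 := by
    rw [Finset.sum_mul, ← Finset.sum_add_distrib]
    exact Finset.sum_congr rfl fun i _ => by ring
  have e2 : (∑ i ∈ S, r i * a i) = (∑ i ∈ S, r i * (a i - a0)) + D' * a0 := by
    rw [Finset.sum_mul, ← Finset.sum_add_distrib]
    exact Finset.sum_congr rfl fun i _ => by ring
  rw [e1, e2]
  set P := ∑ i ∈ S, q i * (a i - a0) with hP
  set P' := ∑ i ∈ S, r i * (a i - a0) with hP'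
  have h1 : |P - P'| ≤ M * (K * D) := by
    rw [hP, hP', ← Finset.sum_sub_distrib]
    calc |∑ i ∈ S, (q i * (a i - a0) - r i * (a i - a0))|
        ≤ ∑ i ∈ S, |q i * (a i - a0) - r i * (a i - a0)| := Finset.abs_sum_le_sum_abs _ _
      _ ≤ ∑ i ∈ S, M * |q i - r i| := by
          refine Finset.sum_le_sum fun i hi => ?_
          rw [← sub_mul, abs_mul, mul_comm]
          exact mul_le_mul_of_nonneg_right (ha i hi) (abs_nonneg _)
      _ ≤ M * (K * D) := by
          rw [← Finset.mul_sum]; exact mul_le_mul_of_nonneg_left hqr hM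
  have h2 : |P'| ≤ M * D' := by
    calc |P'| ≤ ∑ i ∈ S, |r i * (a i - a0)| := Finset.abs_sum_le_sum_abs _ _
      _ ≤ ∑ i ∈ S, M * r i := by
          refine Finset.sum_le_sum fun i hi => ?_
          rw [abs_mul, mul_comm, abs_of_nonneg (hr i hi)]
          exact mul_le_mul_of_nonneg_right (ha i hi) (hr i hi)
      _ = M * D' := by rw [← Finset.mul_sum]
  have h3 : |D' - D| ≤ K * D := by
    refine le_trans ?_ hqr
    rw [abs_sub_comm, ← Finset.sum_sub_distrib]
    exact Finset.abs_sum_le_sum_abs _ _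
  have e3 : (P + D * a0) / D - (P' + D' * a0) / D' = ((P - P') + (P' / D') * (D' - D)) / D := by
    field_simp
    ring
  rw [e3, abs_div, abs_of_pos hq0, div_le_iff₀ hq0]
  have h4 : |P' / D'| ≤ M := by
    rw [abs_div, abs_of_pos hr0, div_le_iff₀ hr0]; exact h2
  calc |P - P' + P' / D' * (D' - D)| ≤ |P - P'| + |P' / D'| * |D' - D| := by
        rw [← abs_mul]; exact abs_add_le _ _
    _ ≤ M * (K * D) + M * (K * D) := by
        gcongr
    _ = 2 * M * K * D := by ring

/-- Bump function. -/
def psi {n : ℕ} (A : ℝ) (Ω : Set (Eu n)) (w x : Eu n) : ℝ :=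
  max 0 (min (A * infDist x Ω - dist x w) (A * infDist w Ωᶜ - infDist x Ω))

/-- Active indices. -/
def actv {n : ℕ} {ι : Type} (Ω : Set (Eu n)) (w : ι → Eu n) (B : ℝ) (x : Eu n) : Set ι :=
  {i | dist x (w i) < B * infDist x Ω ∧ infDist x Ω < B * infDist (w i) Ωᶜ}

/-- The exterior extension. -/
def Fext {n : ℕ} {ι : Type} (A : ℝ) (Ω : Set (Eu n)) (w : ι → Eu n) (v : ι → ℝ) (x : Eu n) : ℝ :=
  (∑' i, (psi A Ω (w i) x * infDist (w i) Ωᶜ ^ n) * v i) /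
    ∑' i, psi A Ω (w i) x * infDist (w i) Ωᶜ ^ n

lemma psi_pos_iff {n : ℕ} {ι : Type} (A : ℝ) (Ω : Set (Eu n)) (w : ι → Eu n) (i : ι) (x : Eu n) :
    0 < psi A Ω (w i) x ↔ i ∈ actv Ω w A x := by
  simp [psi, actv]

lemma psi_nonneg {n : ℕ} (A : ℝ) (Ω : Set (Eu n)) (w x : Eu n) : 0 ≤ psi A Ω w x :=
  le_max_left _ _

lemma psi_lip {n : ℕ} (A : ℝ) (hA : 1 ≤ A) (Ω : Set (Eu n)) (w x y : Eu n) :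
    |psi A Ω w x - psi A Ω w y| ≤ (A + 1) * dist x y := by
  have h1 : infDist x Ω ≤ infDist y Ω + dist x y := infDist_le_infDist_add_dist
  have h2 : infDist y Ω ≤ infDist x Ω + dist y x := infDist_le_infDist_add_dist
  have h3 := dist_triangle x y w
  have h4 := dist_triangle y x w
  rw [dist_comm y x] at h2 h4
  have h0 : 0 ≤ dist x y := dist_nonneg
  have key : ∀ a b a' b' L : ℝ, |a - a'| ≤ L → |b - b'| ≤ L →
      |max 0 (min a b) - max 0 (min a' b')| ≤ L := by
    intro a b a' b' L ha hb
    refine (abs_max_sub_max_le_max _ _ _ _).trans (max_le ?_ ?_)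
    · simpa using (abs_nonneg _).trans ha
    · exact (abs_min_sub_min_le_max _ _ _ _).trans (max_le ha hb)
  refine key _ _ _ _ _ ?_ ?_
  · rw [abs_le]; constructor <;> nlinarith
  · rw [abs_le]; constructor <;> nlinarith

section est

variable {n : ℕ} {ι : Type} {Ω : Set (Eu n)} {w : ι → Eu n}

lemma infDist_le_of_pos {x : Eu n} (hx : 0 < infDist x Ω) (z : Eu n) :
    infDist z Ωᶜ ≤ dist x z := by
  rw [dist_comm]
  refine infDist_le_dist_of_mem ?_
  intro h
  rw [infDist_zero_of_mem h] at hx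
  exact lt_irrefl _ hx

lemma act_sum (hdisj : ∀ i j, i ≠ j → Disjoint (closedBall (w i) (infDist (w i) Ωᶜ / 10))
      (closedBall (w j) (infDist (w j) Ωᶜ / 10)))
    (B : ℝ) (hB : 0 ≤ B) (x : Eu n) (hx : 0 < infDist x Ω) (S : Finset ι)
    (hS : ∀ i ∈ S, i ∈ actv Ω w B x) :
    ∑ i ∈ S, infDist (w i) Ωᶜ ^ n ≤ (20 * B * infDist x Ω) ^ n := by
  have := packing n w (fun i => infDist (w i) Ωᶜ) (fun i => infDist_nonneg) hdisj S x
    (2 * B * infDist x Ω) (by positivity) (by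
      intro i hi y hy
      rw [mem_closedBall] at hy ⊢
      have h1 := (hS i hi).1
      have h2 := infDist_le_of_pos hx (w i)
      have h3 := dist_triangle y (w i) x
      rw [dist_comm (w i) x] at h3
      have : 0 ≤ dist x (w i) := dist_nonneg
      linarith)
  convert this using 2
  ring

lemma act_finite (hdisj : ∀ i j, i ≠ j → Disjoint (closedBall (w i) (infDist (w i) Ωᶜ / 10))
      (closedBall (w j) (infDist (w j) Ωᶜ / 10)))
    (B : ℝ) (hB : 0 < B) (x : Eu n) (hx : 0 < infDist x Ω) :
    (actv Ω w B x).Finite := by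
  by_contra hinf
  have hb : 0 < (infDist x Ω / B) ^ n := by positivity
  obtain ⟨N, hN⟩ := exists_nat_gt ((20 * B * infDist x Ω) ^ n / (infDist x Ω / B) ^ n)
  obtain ⟨S, hS, hcard⟩ := Set.Infinite.exists_subset_card_eq hinf N
  have h1 := act_sum hdisj B hB.le x hx S (fun i hi => hS hi)
  have h2 : ∑ i ∈ S, (infDist x Ω / B) ^ n ≤ ∑ i ∈ S, infDist (w i) Ωᶜ ^ n := by
    refine Finset.sum_le_sum fun i hi => ?_
    have := (hS hi).2
    have h3 : infDist x Ω / B ≤ infDist (w i) Ωᶜ := by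
      rw [div_le_iff₀ hB]; linarith
    exact pow_le_pow_left₀ (by positivity) h3 n
  rw [Finset.sum_const, hcard, nsmul_eq_mul] at h2
  rw [div_lt_iff₀ hb] at hN
  linarith

lemma Fext_eq (A : ℝ) (v : ι → ℝ) (x : Eu n) (S : Finset ι) (hS : actv Ω w A x ⊆ S) :
    Fext A Ω w v x = (∑ i ∈ S, (psi A Ω (w i) x * infDist (w i) Ωᶜ ^ n) * v i) /
      ∑ i ∈ S, psi A Ω (w i) x * infDist (w i) Ωᶜ ^ n := by
  have h0 : ∀ i, i ∉ S → psi A Ω (w i) x = 0 := by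
    intro i hi
    refine le_antisymm (not_lt.mp fun h => ?_) (psi_nonneg _ _ _ _)
    exact hi (hS ((psi_pos_iff A Ω w i x).1 h))
  rw [Fext, tsum_eq_sum (s := S), tsum_eq_sum (s := S)]
  · intro i hi; rw [h0 i hi, zero_mul]
  · intro i hi; rw [h0 i hi, zero_mul, zero_mul]

/-- covering condition -/
def Cov (c δ : ℝ) (Ω : Set (Eu n)) (w : ι → Eu n) : Prop :=
  ∀ x, 0 < infDist x Ω → infDist x Ω < δ → ∃ i, dist x (w i) ≤ 6 * infDist x Ω ∧
        2 * infDist x Ω ≤ 3 * c * infDist (w i) Ωᶜ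

lemma den_lower {c δ : ℝ} (hc : 1 ≤ c) (hcov : Cov c δ Ω w) (x : Eu n)
    (hx : 0 < infDist x Ω) (hxδ : infDist x Ω < δ) (S : Finset ι)
    (hS : actv Ω w (7 * c) x ⊆ S) :
    infDist x Ω * (infDist x Ω / (7 * c)) ^ n ≤
      ∑ i ∈ S, psi (7 * c) Ω (w i) x * infDist (w i) Ωᶜ ^ n := by
  obtain ⟨k, hk1, hk2⟩ := hcov x hx hxδ
  have hpsi : infDist x Ω ≤ psi (7 * c) Ω (w k) x := by
    refine le_max_of_le_right (le_min ?_ ?_) <;> nlinarith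
  have hk : k ∈ S := hS ((psi_pos_iff _ _ _ _ _).1 (hx.trans_le hpsi))
  have h3 : infDist x Ω / (7 * c) ≤ infDist (w k) Ωᶜ := by
    rw [div_le_iff₀ (by positivity)]; nlinarith
  calc infDist x Ω * (infDist x Ω / (7 * c)) ^ n
      ≤ psi (7 * c) Ω (w k) x * infDist (w k) Ωᶜ ^ n := by
        have := pow_le_pow_left₀ (by positivity) h3 n
        exact mul_le_mul hpsi this (by positivity) (psi_nonneg _ _ _ _)
    _ ≤ _ := Finset.single_le_sum (f := fun i => psi (7 * c) Ω (w i) x * infDist (w i) Ωᶜ ^ n)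
        (fun i _ => mul_nonneg (psi_nonneg _ _ _ _) (pow_nonneg infDist_nonneg _)) hk

lemma Fext_between {c δ : ℝ} (hc : 1 ≤ c) (hcov : Cov c δ Ω w)
    (hdisj : ∀ i j, i ≠ j → Disjoint (closedBall (w i) (infDist (w i) Ωᶜ / 10))
      (closedBall (w j) (infDist (w j) Ωᶜ / 10))) (v : ι → ℝ) (x : Eu n)
    (hx : 0 < infDist x Ω) (hxδ : infDist x Ω < δ) :
    ∃ i ∈ actv Ω w (7 * c) x, ∃ j ∈ actv Ω w (7 * c) x,
      v i ≤ Fext (7 * c) Ω w v x ∧ Fext (7 * c) Ω w v x ≤ v j := by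
  have hfin := act_finite hdisj (7 * c) (by positivity) x hx
  have hS : actv Ω w (7 * c) x ⊆ hfin.toFinset := by simp
  have hden := den_lower hc hcov x hx hxδ hfin.toFinset hS
  rw [Fext_eq _ v x _ hS]
  have hpos := lt_of_lt_of_le (by positivity) hden
  have hnn : ∀ i ∈ hfin.toFinset, 0 ≤ psi (7 * c) Ω (w i) x * infDist (w i) Ωᶜ ^ n :=
    fun i _ => mul_nonneg (psi_nonneg _ _ _ _) (pow_nonneg infDist_nonneg _)
  obtain ⟨i, hi, -, hi2⟩ := avg_ge hfin.toFinset _ v hnn hpos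
  obtain ⟨j, hj, -, hj2⟩ := avg_le hfin.toFinset _ v hnn hpos
  exact ⟨i, by simpa using hi, j, by simpa using hj, hi2, hj2⟩

lemma Fext_close {c δ : ℝ} (hc : 1 ≤ c) (hcov : Cov c δ Ω w)
    (hdisj : ∀ i j, i ≠ j → Disjoint (closedBall (w i) (infDist (w i) Ωᶜ / 10))
      (closedBall (w j) (infDist (w j) Ωᶜ / 10))) (v : ι → ℝ) (x y : Eu n)
    (hx : 0 < infDist x Ω) (hxδ : infDist x Ω < δ) (hyδ : infDist y Ω < δ)
    (hxy : dist x y ≤ infDist x Ω / 2) (M : ℝ)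
    (hM : ∀ i ∈ actv Ω w (14 * c) x, ∀ j ∈ actv Ω w (14 * c) x, |v i - v j| ≤ M) :
    |Fext (7 * c) Ω w v x - Fext (7 * c) Ω w v y| ≤
      2 * M * ((7 * c + 1) * (20 * (14 * c) * (7 * c)) ^ n * dist x y / infDist x Ω) := by
  have hfin := act_finite hdisj (14 * c) (by positivity) x hx
  set S := hfin.toFinset
  have h1 : infDist x Ω ≤ infDist y Ω + dist x y := infDist_le_infDist_add_dist
  have h2 : infDist y Ω ≤ infDist x Ω + dist y x := infDist_le_infDist_add_dist
  rw [dist_comm y x] at h2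
  have hy : 0 < infDist y Ω := by linarith
  have hd0 : ∀ i, 0 ≤ infDist (w i) Ωᶜ := fun i => infDist_nonneg
  have hSx : actv Ω w (7 * c) x ⊆ S := by
    intro i hi
    simp only [S, Set.Finite.coe_toFinset]
    have := hd0 i
    exact ⟨by nlinarith [hi.1], by nlinarith [hi.2]⟩
  have hSy : actv Ω w (7 * c) y ⊆ S := by
    intro i hi
    simp only [S, Set.Finite.coe_toFinset]
    have := hd0 i
    have h3 := dist_triangle x y (w i)
    exact ⟨by nlinarith [hi.1], by nlinarith [hi.2]⟩
  have hdx := den_lower hc hcov x hx hxδ S hSx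
  have hdy := den_lower hc hcov y hy hyδ S hSy
  have hposx := lt_of_lt_of_le (by positivity) hdx
  have hposy := lt_of_lt_of_le (by positivity) hdy
  obtain ⟨k, hk, -⟩ := Fext_between hc hcov hdisj v x hx hxδ
  have hk' : k ∈ actv Ω w (14 * c) x := by simpa [S] using hSx hk
  rw [Fext_eq _ v x S hSx, Fext_eq _ v y S hSy]
  refine quot_est S _ _ v (v k) M _ ?_ ?_ hposx hposy ?_ ?_
  · exact (abs_nonneg _).trans (hM k hk' k hk')
  · exact fun i _ => mul_nonneg (psi_nonneg _ _ _ _) (pow_nonneg infDist_nonneg _)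
  · intro i hi
    exact hM i (by simpa [S] using hi) k hk'
  · calc ∑ i ∈ S, |psi (7 * c) Ω (w i) x * infDist (w i) Ωᶜ ^ n -
            psi (7 * c) Ω (w i) y * infDist (w i) Ωᶜ ^ n|
        ≤ ∑ i ∈ S, ((7 * c + 1) * dist x y) * infDist (w i) Ωᶜ ^ n := by
          refine Finset.sum_le_sum fun i _ => ?_
          rw [← sub_mul, abs_mul, abs_of_nonneg (pow_nonneg (hd0 i) n)]
          exact mul_le_mul_of_nonneg_right (psi_lip _ (by linarith) _ _ _ _)
            (pow_nonneg (hd0 i) n)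
      _ ≤ ((7 * c + 1) * dist x y) * (20 * (14 * c) * infDist x Ω) ^ n := by
          rw [← Finset.mul_sum]
          refine mul_le_mul_of_nonneg_left ?_ (by positivity)
          exact act_sum hdisj _ (by positivity) x hx S (fun i hi => by simpa [S] using hi)
      _ = ((7 * c + 1) * (20 * (14 * c) * (7 * c)) ^ n * dist x y / infDist x Ω) *
            (infDist x Ω * (infDist x Ω / (7 * c)) ^ n) := by
          have e : 20 * (14 * c) * infDist x Ω =
            (20 * (14 * c) * (7 * c)) * (infDist x Ω / (7 * c)) := by field_simp
          rw [e, mul_pow (20 * (14 * c) * (7 * c))]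
          field_simp
      _ ≤ _ := mul_le_mul_of_nonneg_left hdx (by positivity)

end est

section pointwise

variable {n : ℕ} {ι : Type} {Ω : Set (Eu n)} {w : ι → Eu n}

open Classical in
/-- The extension before cut-off. -/
def Ft (A : ℝ) (Ω : Set (Eu n)) (w : ι → Eu n) (f : Eu n → ℝ) (z : ι → Eu n) (x : Eu n) : ℝ :=
  if x ∈ Ω then f x else Fext A Ω w (fun i => f (z i)) x

lemma dist_z_le {c : ℝ} {z : ι → Eu n}
    (hz : ∀ i, dist (z i) (w i) ≤ infDist (w i) Ωᶜ / 10) {x : Eu n} (hx : 0 < infDist x Ω)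
    {i : ι} (hi : i ∈ actv Ω w (14 * c) x) : dist x (z i) ≤ 28 * c * infDist x Ω := by
  have h1 := dist_triangle x (w i) (z i)
  have h2 := hz i
  rw [dist_comm] at h2
  have h3 := infDist_le_of_pos hx (w i)
  have h4 : dist x (w i) < 14 * c * infDist x Ω := hi.1
  have : 0 ≤ dist x (w i) := dist_nonneg
  linarith

lemma actv_mono {c : ℝ} (hc : 1 ≤ c) {x : Eu n} {i : ι} (hi : i ∈ actv Ω w (7 * c) x) :
    i ∈ actv Ω w (14 * c) x := by
  have h1 : 0 ≤ infDist x Ω := infDist_nonneg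
  have h2 : 0 ≤ infDist (w i) Ωᶜ := infDist_nonneg
  exact ⟨by nlinarith [hi.1], by nlinarith [hi.2]⟩

lemma ext_pos (hne : Ω.Nonempty) (ho : IsOpen Ω) {x : Eu n} (hx : x ∉ frontier Ω)
    (hxΩ : x ∉ Ω) : 0 < infDist x Ω := by
  rw [← infDist_pos_iff_notMem_closure hne]
  intro h
  refine hx ⟨h, ?_⟩
  rwa [ho.interior_eq]

lemma Ft_rep {c δ : ℝ} (hc : 1 ≤ c) (hne : Ω.Nonempty) (ho : IsOpen Ω) (hcov : Cov c δ Ω w)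
    (hdisj : ∀ i j, i ≠ j → Disjoint (closedBall (w i) (infDist (w i) Ωᶜ / 10))
      (closedBall (w j) (infDist (w j) Ωᶜ / 10)))
    (f g Γ : Eu n → ℝ) (N : Set (Eu n)) (z : ι → Eu n)
    (hz : ∀ i, dist (z i) (w i) ≤ infDist (w i) Ωᶜ / 10)
    (hzΩ : ∀ i, z i ∈ Ω \ N)
    (hΓ1 : ∀ x ∈ Ω, g x ≤ Γ x ∧ |f x| ≤ Γ x)
    (hΓ2 : ∀ x, 0 < infDist x Ω → ∀ i ∈ actv Ω w (14 * c) x, g (z i) ≤ Γ x ∧ |f (z i)| ≤ Γ x)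
    (x : Eu n) (hxN : x ∉ N) (hxf : x ∉ frontier Ω) (hxδ : infDist x Ω < δ) :
    ∃ a ∈ Ω \ N, ∃ b ∈ Ω \ N, dist x a ≤ 28 * c * infDist x Ω ∧ dist x b ≤ 28 * c * infDist x Ω ∧
      g a ≤ Γ x ∧ g b ≤ Γ x ∧ |f a| ≤ Γ x ∧ |f b| ≤ Γ x ∧
      f a ≤ Ft (7 * c) Ω w f z x ∧ Ft (7 * c) Ω w f z x ≤ f b := by
  by_cases hx : x ∈ Ω
  · have := infDist_nonneg (x := x) (s := Ω)
    have h0 : dist x x ≤ 28 * c * infDist x Ω := by rw [dist_self]; positivity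
    have h1 := hΓ1 x hx
    refine ⟨x, ⟨hx, hxN⟩, x, ⟨hx, hxN⟩, h0, h0, h1.1, h1.1, h1.2, h1.2, ?_, ?_⟩ <;> simp [Ft, hx]
  · have hpos := ext_pos hne ho hxf hx
    obtain ⟨i, hi, j, hj, h1, h2⟩ :=
      Fext_between hc hcov hdisj (fun i => f (z i)) x hpos hxδ
    have hi' := actv_mono hc hi
    have hj' := actv_mono hc hj
    refine ⟨z i, hzΩ i, z j, hzΩ j, dist_z_le hz hpos hi', dist_z_le hz hpos hj',
      (hΓ2 x hpos i hi').1, (hΓ2 x hpos j hj').1, (hΓ2 x hpos i hi').2, (hΓ2 x hpos j hj').2,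
      ?_, ?_⟩
    · simpa [Ft, hx] using h1
    · simpa [Ft, hx] using h2

/-- The constant in the local estimate. -/
def K1 (n : ℕ) (c : ℝ) : ℝ := 224 * c * ((7 * c + 1) * (20 * (14 * c) * (7 * c)) ^ n)

lemma Ft_close {c δ : ℝ} (hc : 1 ≤ c) (hne : Ω.Nonempty) (ho : IsOpen Ω) (hcov : Cov c δ Ω w)
    (hdisj : ∀ i j, i ≠ j → Disjoint (closedBall (w i) (infDist (w i) Ωᶜ / 10))
      (closedBall (w j) (infDist (w j) Ωᶜ / 10)))
    (f g Γ : Eu n → ℝ) (N : Set (Eu n)) (z : ι → Eu n)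
    (hz : ∀ i, dist (z i) (w i) ≤ infDist (w i) Ωᶜ / 10)
    (hzΩ : ∀ i, z i ∈ Ω \ N)
    (hfg : ∀ x ∈ Ω \ N, ∀ y ∈ Ω \ N, |f x - f y| ≤ dist x y * (g x + g y))
    (hΓ2 : ∀ x, 0 < infDist x Ω → ∀ i ∈ actv Ω w (14 * c) x, g (z i) ≤ Γ x ∧ |f (z i)| ≤ Γ x)
    (hΓ0 : ∀ x, 0 ≤ Γ x)
    (x y : Eu n) (hxf : x ∉ frontier Ω) (hxδ : infDist x Ω < δ)
    (hyδ : infDist y Ω < δ) (hxy : dist x y ≤ infDist x Ω / 2) :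
    |Ft (7 * c) Ω w f z x - Ft (7 * c) Ω w f z y| ≤ K1 n c * dist x y * Γ x := by
  by_cases hx : x ∈ Ω
  · rw [infDist_zero_of_mem hx, zero_div] at hxy
    have : x = y := dist_le_zero.1 hxy
    subst this
    simp
  · have hpos := ext_pos hne ho hxf hx
    have hy : y ∉ Ω := by
      intro hy
      have := infDist_le_dist_of_mem (x := x) hy
      linarith
    simp only [Ft, hx, hy, if_false]
    have := Fext_close hc hcov hdisj (fun i => f (z i)) x y hpos hxδ hyδ hxy
      (112 * c * infDist x Ω * Γ x) (by
        intro i hi j hj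
        refine (hfg _ (hzΩ i) _ (hzΩ j)).trans ?_
        have h1 := dist_z_le hz hpos hi
        have h2 := dist_z_le hz hpos hj
        have h3 := dist_triangle (z i) x (z j)
        rw [dist_comm (z i) x] at h3
        have h4 := (hΓ2 x hpos i hi).1
        have h5 := (hΓ2 x hpos j hj).1
        have h6 := hΓ0 x
        calc dist (z i) (z j) * (g (z i) + g (z j)) ≤ dist (z i) (z j) * (2 * Γ x) := by
              gcongr; linarith
          _ ≤ (56 * c * infDist x Ω) * (2 * Γ x) := by
              gcongr; linarith
          _ = _ := by ring)
    refine this.trans (le_of_eq ?_)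
    rw [K1]
    field_simp
    ring

lemma Ft_hajlasz {c δ : ℝ} (hc : 1 ≤ c) (hne : Ω.Nonempty) (ho : IsOpen Ω) (hcov : Cov c δ Ω w)
    (hdisj : ∀ i j, i ≠ j → Disjoint (closedBall (w i) (infDist (w i) Ωᶜ / 10))
      (closedBall (w j) (infDist (w j) Ωᶜ / 10)))
    (f g Γ : Eu n → ℝ) (N : Set (Eu n)) (z : ι → Eu n)
    (hz : ∀ i, dist (z i) (w i) ≤ infDist (w i) Ωᶜ / 10)
    (hzΩ : ∀ i, z i ∈ Ω \ N)
    (hfg : ∀ x ∈ Ω \ N, ∀ y ∈ Ω \ N, |f x - f y| ≤ dist x y * (g x + g y))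
    (hΓ1 : ∀ x ∈ Ω, g x ≤ Γ x ∧ |f x| ≤ Γ x)
    (hΓ2 : ∀ x, 0 < infDist x Ω → ∀ i ∈ actv Ω w (14 * c) x, g (z i) ≤ Γ x ∧ |f (z i)| ≤ Γ x)
    (hΓ0 : ∀ x, 0 ≤ Γ x)
    (x y : Eu n) (hxN : x ∉ N) (hxf : x ∉ frontier Ω) (hxδ : infDist x Ω < δ)
    (hyN : y ∉ N) (hyf : y ∉ frontier Ω) (hyδ : infDist y Ω < δ) :
    |Ft (7 * c) Ω w f z x - Ft (7 * c) Ω w f z y| ≤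
      (K1 n c + 1 + 112 * c) * dist x y * (Γ x + Γ y) := by
  have hK : 0 ≤ K1 n c := by unfold K1; positivity
  have hx0 := hΓ0 x
  have hy0 := hΓ0 y
  have hd0 : 0 ≤ dist x y := dist_nonneg
  by_cases h1 : dist x y ≤ infDist x Ω / 2
  · refine (Ft_close hc hne ho hcov hdisj f g Γ N z hz hzΩ hfg hΓ2 hΓ0 x y hxf hxδ hyδ h1).trans ?_
    have : K1 n c ≤ K1 n c + 1 + 112 * c := by linarith
    have h3 : Γ x ≤ Γ x + Γ y := by linarith
    gcongr
  by_cases h2 : dist x y ≤ infDist y Ω / 2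
  · rw [dist_comm] at h2
    rw [abs_sub_comm]
    refine (Ft_close hc hne ho hcov hdisj f g Γ N z hz hzΩ hfg hΓ2 hΓ0 y x hyf hyδ hxδ h2).trans ?_
    rw [dist_comm y x]
    have : K1 n c ≤ K1 n c + 1 + 112 * c := by linarith
    have h3 : Γ y ≤ Γ x + Γ y := by linarith
    gcongr
  push Not at h1 h2
  obtain ⟨a, ha, b, hb, ha1, hb1, ha2, hb2, -, -, ha3, hb3⟩ :=
    Ft_rep hc hne ho hcov hdisj f g Γ N z hz hzΩ hΓ1 hΓ2 x hxN hxf hxδ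
  obtain ⟨a', ha', b', hb', ha1', hb1', ha2', hb2', -, -, ha3', hb3'⟩ :=
    Ft_rep hc hne ho hcov hdisj f g Γ N z hz hzΩ hΓ1 hΓ2 y hyN hyf hyδ
  have key : ∀ a ∈ Ω \ N, ∀ b ∈ Ω \ N, dist x a ≤ 28 * c * infDist x Ω →
      dist y b ≤ 28 * c * infDist y Ω → g a ≤ Γ x → g b ≤ Γ y →
      |f a - f b| ≤ (K1 n c + 1 + 112 * c) * dist x y * (Γ x + Γ y) := by
    intro a ha b hb h3 h4 h5 h6
    refine (hfg a ha b hb).trans ?_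
    have h7 : dist a b ≤ (K1 n c + 1 + 112 * c) * dist x y := by
      have e1 := dist_triangle4 a x y b
      rw [dist_comm a x] at e1
      have e2 : 28 * c * infDist x Ω ≤ 28 * c * (2 * dist x y) := by gcongr; linarith
      have e3 : 28 * c * infDist y Ω ≤ 28 * c * (2 * dist x y) := by gcongr; linarith
      have e4 : 0 ≤ K1 n c * dist x y := by positivity
      linarith
    calc dist a b * (g a + g b) ≤ dist a b * (Γ x + Γ y) := by gcongr
      _ ≤ _ := by gcongr
  have k1 := (abs_le.1 (key b hb a' ha' hb1 ha1' hb2 ha2')).2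
  have k2 := (abs_le.1 (key a ha b' hb' ha1 hb1' ha2 hb2')).1
  rw [abs_le]
  constructor <;> linarith

lemma Ft_bound {c δ : ℝ} (hc : 1 ≤ c) (hne : Ω.Nonempty) (ho : IsOpen Ω) (hcov : Cov c δ Ω w)
    (hdisj : ∀ i j, i ≠ j → Disjoint (closedBall (w i) (infDist (w i) Ωᶜ / 10))
      (closedBall (w j) (infDist (w j) Ωᶜ / 10)))
    (f g Γ : Eu n → ℝ) (N : Set (Eu n)) (z : ι → Eu n)
    (hz : ∀ i, dist (z i) (w i) ≤ infDist (w i) Ωᶜ / 10)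
    (hzΩ : ∀ i, z i ∈ Ω \ N)
    (hΓ1 : ∀ x ∈ Ω, g x ≤ Γ x ∧ |f x| ≤ Γ x)
    (hΓ2 : ∀ x, 0 < infDist x Ω → ∀ i ∈ actv Ω w (14 * c) x, g (z i) ≤ Γ x ∧ |f (z i)| ≤ Γ x)
    (x : Eu n) (hxN : x ∉ N) (hxf : x ∉ frontier Ω) (hxδ : infDist x Ω < δ) :
    |Ft (7 * c) Ω w f z x| ≤ Γ x := by
  obtain ⟨a, ha, b, hb, -, -, -, -, ha2, hb2, ha3, hb3⟩ :=
    Ft_rep hc hne ho hcov hdisj f g Γ N z hz hzΩ hΓ1 hΓ2 x hxN hxf hxδ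
  rw [abs_le] at ha2 hb2 ⊢
  constructor <;> linarith

end pointwise

/-- cut-off estimate -/
lemma cutoff_est (Fx Fy tx ty Gx Gy D C δ : ℝ) (hδ : 0 < δ) (hC : 0 ≤ C)
    (hGx : 0 ≤ Gx) (hGy : 0 ≤ Gy) (hD : 0 ≤ D)
    (htx : 0 ≤ tx) (hty : 0 ≤ ty) (hxy : |tx - ty| ≤ D)
    (hF : tx < δ → ty < δ → |Fx - Fy| ≤ C * D * (Gx + Gy))
    (hx : tx < δ → |Fx| ≤ Gx) (hy : ty < δ → |Fy| ≤ Gy) :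
    |max 0 (1 - tx / δ) * Fx - max 0 (1 - ty / δ) * Fy| ≤
      D * ((if tx < δ then (C + 1 / δ) * Gx else 0) + (if ty < δ then (C + 1 / δ) * Gy else 0)) := by
  have hlt : ∀ t, t < δ → 0 < 1 - t / δ := by
    intro t ht; rw [sub_pos, div_lt_one hδ]; exact ht
  have hge : ∀ t, ¬ t < δ → 1 - t / δ ≤ 0 := by
    intro t ht; rw [sub_nonpos, one_le_div hδ]; exact not_lt.1 ht
  have hdiff : |(1 - tx / δ) - (1 - ty / δ)| ≤ D / δ := by
    have : (1 - tx / δ) - (1 - ty / δ) = - ((tx - ty) / δ) := by ring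
    rw [this, abs_neg, abs_div, abs_of_pos hδ]
    gcongr
  by_cases h1 : tx < δ <;> by_cases h2 : ty < δ
  · simp only [h1, h2, if_true]
    rw [max_eq_right (hlt _ h1).le, max_eq_right (hlt _ h2).le]
    have e : (1 - tx / δ) * Fx - (1 - ty / δ) * Fy =
      (1 - tx / δ) * (Fx - Fy) + ((1 - tx / δ) - (1 - ty / δ)) * Fy := by ring
    have hle1 : |1 - tx / δ| ≤ 1 := by
      rw [abs_of_pos (hlt _ h1)]
      have : 0 ≤ tx / δ := by positivity
      linarith
    calc |(1 - tx / δ) * Fx - (1 - ty / δ) * Fy|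
        ≤ |1 - tx / δ| * |Fx - Fy| + |(1 - tx / δ) - (1 - ty / δ)| * |Fy| := by
          rw [e, ← abs_mul, ← abs_mul]; exact abs_add_le _ _
      _ ≤ 1 * (C * D * (Gx + Gy)) + D / δ * Gy := by
          have a1 := hF h1 h2
          have a2 := hy h2
          gcongr
      _ ≤ 1 * (C * D * (Gx + Gy)) + D / δ * (Gx + Gy) := by
          gcongr; linarith
      _ = _ := by ring
  · simp only [h1, h2, if_true, if_false]
    rw [max_eq_right (hlt _ h1).le, max_eq_left (hge _ h2), zero_mul, sub_zero, add_zero, abs_mul,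
      abs_of_pos (hlt _ h1)]
    have h3 : 1 - tx / δ ≤ D / δ := by
      have := (abs_le.1 hdiff).2
      linarith [hge _ h2]
    calc (1 - tx / δ) * |Fx| ≤ D / δ * Gx := by
          have a1 := hx h1
          gcongr
      _ = D * ((1 / δ) * Gx) := by ring
      _ ≤ _ := by gcongr; linarith
  · simp only [h1, h2, if_true, if_false]
    rw [max_eq_right (hlt _ h2).le, max_eq_left (hge _ h1), zero_mul, zero_sub, zero_add, abs_neg,
      abs_mul, abs_of_pos (hlt _ h2)]
    have h3 : 1 - ty / δ ≤ D / δ := by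
      have := (abs_le.1 hdiff).1
      linarith [hge _ h1]
    calc (1 - ty / δ) * |Fy| ≤ D / δ * Gy := by
          have a1 := hy h2
          gcongr
      _ = D * ((1 / δ) * Gy) := by ring
      _ ≤ _ := by gcongr; linarith
  · simp only [h1, h2, if_false]
    rw [max_eq_left (hge _ h1), max_eq_left (hge _ h2)]
    simp

section integration

lemma select {n : ℕ} (h : Eu n → ℝ≥0∞) (hm : Measurable h) (N : Set (Eu n)) (hN : volume N = 0)
    (w : Eu n) (r : ℝ) (hr : 0 < r) :
    ∃ z ∈ closedBall w r, z ∉ N ∧ h z * volume (closedBall w r) ≤ ∫⁻ x in closedBall w r, h x := by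
  have hv0 : volume (closedBall w r) ≠ 0 := (measure_closedBall_pos _ _ hr).ne'
  have hv1 : volume (closedBall w r) ≠ ⊤ := measure_closedBall_lt_top.ne
  have : IsFiniteMeasure (volume.restrict (closedBall w r)) := ⟨by
    rw [Measure.restrict_apply_univ]; exact measure_closedBall_lt_top⟩
  obtain ⟨z, hz, hle⟩ := exists_notMem_null_le_laverage
    (μ := volume.restrict (closedBall w r)) (N := N ∪ (closedBall w r)ᶜ) (f := h)
    (by rwa [Ne, Measure.restrict_eq_zero]) hm.aemeasurable (by
      refine measure_union_null ?_ ?_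
      · exact le_antisymm ((Measure.restrict_apply_le _ _).trans hN.le) bot_le
      · rw [Measure.restrict_apply measurableSet_closedBall.compl]; simp)
  rw [mem_union, not_or, notMem_compl_iff] at hz
  refine ⟨z, hz.2, hz.1, ?_⟩
  rw [setLAverage_eq, ENNReal.le_div_iff_mul_le (Or.inl hv0) (Or.inl hv1)] at hle
  exact hle

lemma le_rpow_toReal {a p : ℝ} {H : ℝ≥0∞} (ha : 0 ≤ a) (hp : 0 < p) (hH : H ≠ ⊤)
    (h : ENNReal.ofReal a ^ p ≤ H) : a ≤ H.toReal ^ (1 / p) := by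
  rw [one_div, Real.le_rpow_inv_iff_of_pos ha ENNReal.toReal_nonneg hp]
  rw [ENNReal.ofReal_rpow_of_nonneg ha hp.le] at h
  exact (ENNReal.ofReal_le_iff_le_toReal hH).1 h

variable {n : ℕ} {ι : Type} {Ω : Set (Eu n)} {w : ι → Eu n}

/-- The dominating function. -/
def Hf (B : ℝ) (Ω : Set (Eu n)) (w : ι → Eu n) (h : Eu n → ℝ≥0∞) (z : ι → Eu n) (x : Eu n) :
    ℝ≥0∞ :=
  Ω.indicator h x + ∑' i, ({x | i ∈ actv Ω w B x}).indicator (fun _ => h (z i)) x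

lemma meas_actv (B : ℝ) (i : ι) : MeasurableSet {x : Eu n | i ∈ actv Ω w B x} := by
  have h1 : Continuous fun x : Eu n => infDist x Ω := continuous_infDist_pt Ω
  have h2 : IsOpen {x : Eu n | dist x (w i) < B * infDist x Ω} :=
    isOpen_lt (by fun_prop) (by fun_prop)
  have h3 : IsOpen {x : Eu n | infDist x Ω < B * infDist (w i) Ωᶜ} :=
    isOpen_lt (by fun_prop) (by fun_prop)
  exact (h2.inter h3).measurableSet

lemma meas_Hf [Countable ι] (ho : IsOpen Ω) (B : ℝ) (h : Eu n → ℝ≥0∞) (hm : Measurable h)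
    (z : ι → Eu n) : Measurable (Hf B Ω w h z) := by
  unfold Hf
  refine (hm.indicator ho.measurableSet).add ?_
  refine Measurable.tsum fun i => ?_
  exact measurable_const.indicator (meas_actv B i)

lemma meas_Fext [Countable ι] (A : ℝ) (v : ι → ℝ) : Measurable (Fext A Ω w v) := by
  have h1 : Continuous fun x : Eu n => infDist x Ω := continuous_infDist_pt Ω
  have h2 : ∀ i, Measurable fun x => psi A Ω (w i) x := by
    intro i
    unfold psi
    exact Continuous.measurable (by fun_prop)
  unfold Fext
  refine Measurable.div ?_ ?_
  · exact Measurable.tsum fun i => ((h2 i).mul_const _).mul_const _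
  · exact Measurable.tsum fun i => (h2 i).mul_const _

lemma Hf_ne_top (hdisj : ∀ i j, i ≠ j → Disjoint (closedBall (w i) (infDist (w i) Ωᶜ / 10))
      (closedBall (w j) (infDist (w j) Ωᶜ / 10)))
    (B : ℝ) (hB : 0 < B) (h : Eu n → ℝ≥0∞) (hh : ∀ x, h x ≠ ⊤) (z : ι → Eu n) (x : Eu n) :
    Hf B Ω w h z x ≠ ⊤ := by
  have hfin : (actv Ω w B x).Finite := by
    rcases (infDist_nonneg (x := x) (s := Ω)).eq_or_lt with h0 | h0
    · have : actv Ω w B x = ∅ := by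
        ext i
        simp only [actv, mem_ofPred_eq, mem_empty_iff_false, iff_false, ← h0, mul_zero]
        exact fun hi => absurd hi.1 (not_lt.mpr dist_nonneg)
      rw [this]; exact finite_empty
    · exact act_finite hdisj B hB x h0
  refine ENNReal.add_ne_top.2 ⟨?_, ?_⟩
  · by_cases hx : x ∈ Ω <;> simp [hx, hh]
  · rw [tsum_eq_sum (s := hfin.toFinset)]
    · refine ENNReal.sum_ne_top.2 fun i _ => ?_
      by_cases hx : x ∈ {x | i ∈ actv Ω w B x}
      · rw [indicator_of_mem hx]; exact hh _
      · rw [indicator_of_notMem hx]; exact ENNReal.zero_ne_top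
    · intro i hi
      refine indicator_of_notMem ?_ _
      simpa using hi

lemma Hf_int [Countable ι] (ho : IsOpen Ω) (hw : ∀ i, w i ∈ Ω) (hcne : (Ωᶜ).Nonempty)
    (hdisj : ∀ i j, i ≠ j → Disjoint (closedBall (w i) (infDist (w i) Ωᶜ / 10))
      (closedBall (w j) (infDist (w j) Ωᶜ / 10)))
    (B : ℝ) (hB : 0 < B) (h : Eu n → ℝ≥0∞) (hm : Measurable h) (z : ι → Eu n)
    (hz : ∀ i, h (z i) * volume (closedBall (w i) (infDist (w i) Ωᶜ / 10)) ≤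
      ∫⁻ x in closedBall (w i) (infDist (w i) Ωᶜ / 10), h x) :
    ∫⁻ x, Hf B Ω w h z x ≤ (1 + ENNReal.ofReal ((10 * B * B) ^ n)) * ∫⁻ x in Ω, h x := by
  have hpos : ∀ i, 0 < infDist (w i) Ωᶜ := fun i =>
    (ho.isClosed_compl.notMem_iff_infDist_pos hcne).1 (by simpa using hw i)
  unfold Hf
  rw [lintegral_add_left (hm.indicator ho.measurableSet), lintegral_indicator ho.measurableSet,
    lintegral_tsum (fun i => (measurable_const.indicator (meas_actv B i)).aemeasurable), add_mul,
    one_mul]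
  gcongr
  calc ∑' i, ∫⁻ x, ({x | i ∈ actv Ω w B x}).indicator (fun _ => h (z i)) x
      ≤ ∑' i, ENNReal.ofReal ((10 * B * B) ^ n) *
          ∫⁻ x in closedBall (w i) (infDist (w i) Ωᶜ / 10), h x := by
        refine ENNReal.tsum_le_tsum fun i => ?_
        rw [lintegral_indicator (meas_actv B i), setLIntegral_const]
        have hd := hpos i
        have hv : volume {x | i ∈ actv Ω w B x} ≤ ENNReal.ofReal ((10 * B * B) ^ n) *
            volume (closedBall (w i) (infDist (w i) Ωᶜ / 10)) := by
          have hsub : {x | i ∈ actv Ω w B x} ⊆ closedBall (w i) (B * B * infDist (w i) Ωᶜ) := by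
            rintro x ⟨h1, h2⟩
            rw [mem_closedBall]
            nlinarith
          refine (measure_mono hsub).trans (le_of_eq ?_)
          rw [Measure.addHaar_closedBall _ _ (by positivity),
            Measure.addHaar_closedBall volume _ (r := infDist (w i) Ωᶜ / 10) (by positivity),
            finrank_euclideanSpace_fin, ← mul_assoc, ← ENNReal.ofReal_mul (by positivity),
            ← mul_pow]
          have e : B * B * infDist (w i) Ωᶜ = 10 * B * B * (infDist (w i) Ωᶜ / 10) := by ring
          rw [e]
        calc h (z i) * volume {x | i ∈ actv Ω w B x}
            ≤ h (z i) * (ENNReal.ofReal ((10 * B * B) ^ n) *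
              volume (closedBall (w i) (infDist (w i) Ωᶜ / 10))) := by gcongr
          _ = ENNReal.ofReal ((10 * B * B) ^ n) *
              (h (z i) * volume (closedBall (w i) (infDist (w i) Ωᶜ / 10))) := by ring
          _ ≤ _ := by gcongr; exact hz i
    _ = ENNReal.ofReal ((10 * B * B) ^ n) *
          ∫⁻ x in ⋃ i, closedBall (w i) (infDist (w i) Ωᶜ / 10), h x := by
        rw [ENNReal.tsum_mul_left, lintegral_iUnion (fun i => measurableSet_closedBall)]
        intro i j hij
        exact hdisj i j hij
    _ ≤ _ := by
        gcongr
        refine iUnion_subset fun i => ?_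
        refine (closedBall_subset_ball ?_).trans ball_infDist_compl_subset
        linarith [hpos i]

end integration

lemma core (n : ℕ) (hn : 1 ≤ n) (p : ℝ) (hp : 0 < p)
    (c : ℝ) (hc : 1 ≤ c) (Ω : Set (Eu n))
    (hΩ : IsUniformDomain n c Ω) (hΩb : Bornology.IsBounded Ω) :
    ∃ K : ℝ≥0∞, K ≠ ⊤ ∧ ∀ f g : Eu n → ℝ, Measurable f → Measurable g → (∀ x, 0 ≤ g x) →
      ∀ N : Set (Eu n), volume N = 0 →
      (∀ x ∈ Ω \ N, ∀ y ∈ Ω \ N, |f x - f y| ≤ ‖x - y‖ * (g x + g y)) →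
      ∃ F G : Eu n → ℝ, (∀ x ∈ Ω, F x = f x) ∧ Measurable F ∧ IsHajlaszGradientOn n F G univ ∧
        ∫⁻ x, ENNReal.ofReal |F x| ^ p ≤ K * ∫⁻ x in Ω, (ENNReal.ofReal |f x| ^ p +
          ENNReal.ofReal |g x| ^ p) ∧
        ∫⁻ x, ENNReal.ofReal |G x| ^ p ≤ K * ∫⁻ x in Ω, (ENNReal.ofReal |f x| ^ p +
          ENNReal.ofReal |g x| ^ p) := by
  classical
  obtain ⟨δ, u, hδ, hcount, huΩ, hdisj0, hcov0⟩ := whitney n hn c hc Ω hΩ hΩb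
  have hfr := frontier_null n hn c hc Ω hΩ
  obtain ⟨ho, hcon, -⟩ := hΩ
  have hne := hcon.nonempty
  have : Nonempty (Fin n) := ⟨⟨0, hn⟩⟩
  have hcne : (Ωᶜ).Nonempty := by
    rw [nonempty_compl]
    rintro rfl
    exact NormedSpace.unbounded_univ ℝ (Eu n) hΩb
  have : Countable u := hcount
  set w : u → Eu n := fun i => i.1 with hwdef
  have hdisj : ∀ i j, i ≠ j → Disjoint (closedBall (w i) (infDist (w i) Ωᶜ / 10))
      (closedBall (w j) (infDist (w j) Ωᶜ / 10)) := by
    intro i j hij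
    exact hdisj0 i.2 j.2 (fun h => hij (Subtype.ext h))
  have hw : ∀ i, w i ∈ Ω := fun i => huΩ i.2
  have hcov : Cov c δ Ω w := by
    intro x h1 h2
    obtain ⟨v, hv, h3, h4⟩ := hcov0 x h1 h2
    exact ⟨⟨v, hv⟩, h3, h4⟩
  have hpos : ∀ i, 0 < infDist (w i) Ωᶜ := fun i =>
    (ho.isClosed_compl.notMem_iff_infDist_pos hcne).1 (by simpa using hw i)
  set K2 : ℝ≥0∞ := 1 + ENNReal.ofReal ((10 * (14 * c) * (14 * c)) ^ n) with hK2
  set C1 : ℝ := K1 n c + 1 + 112 * c with hC1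
  have hK1 : 0 ≤ K1 n c := by unfold K1; positivity
  have hC1p : 0 ≤ C1 := by positivity
  set C2 : ℝ := C1 + 1 / δ with hC2
  have hC2p : 0 ≤ C2 := by positivity
  have hK2t : K2 ≠ ⊤ := ENNReal.add_ne_top.2 ⟨ENNReal.one_ne_top, ENNReal.ofReal_ne_top⟩
  have hC2t : ENNReal.ofReal C2 ^ p ≠ ⊤ := ENNReal.rpow_ne_top_of_nonneg hp.le ENNReal.ofReal_ne_top
  refine ⟨(1 + ENNReal.ofReal C2 ^ p) * K2, ENNReal.mul_ne_top (ENNReal.add_ne_top.2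
    ⟨ENNReal.one_ne_top, hC2t⟩) hK2t, ?_⟩
  intro f g hf hg hg0 N hN hfg
  set h : Eu n → ℝ≥0∞ := fun x => ENNReal.ofReal |f x| ^ p + ENNReal.ofReal |g x| ^ p with hh
  have hm : Measurable h := by
    have h1 : Measurable fun x => ENNReal.ofReal |f x| := (hf.abs).ennreal_ofReal
    have h2 : Measurable fun x => ENNReal.ofReal |g x| := (hg.abs).ennreal_ofReal
    exact (h1.pow_const p).add (h2.pow_const p)
  have hht : ∀ x, h x ≠ ⊤ := fun x => ENNReal.add_ne_top.2
    ⟨ENNReal.rpow_ne_top_of_nonneg hp.le ENNReal.ofReal_ne_top,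
      ENNReal.rpow_ne_top_of_nonneg hp.le ENNReal.ofReal_ne_top⟩
  have hsel := fun i => select h hm N hN (w i) (infDist (w i) Ωᶜ / 10)
    (by have := hpos i; positivity)
  choose z hz1 hz2 hz3 using hsel
  have hzd : ∀ i, dist (z i) (w i) ≤ infDist (w i) Ωᶜ / 10 := fun i => hz1 i
  have hzΩ : ∀ i, z i ∈ Ω \ N := by
    intro i
    refine ⟨?_, hz2 i⟩
    refine ball_infDist_compl_subset (x := w i) ?_
    rw [mem_ball]
    linarith [hzd i, hpos i]
  set H := Hf (14 * c) Ω w h z with hHdef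
  have hHm : Measurable H := meas_Hf ho _ h hm z
  have hHt : ∀ x, H x ≠ ⊤ := Hf_ne_top hdisj _ (by positivity) h hht z
  have hHint : ∫⁻ x, H x ≤ K2 * ∫⁻ x in Ω, h x :=
    Hf_int ho hw hcne hdisj _ (by positivity) h hm z hz3
  set Γ : Eu n → ℝ := fun x => (H x).toReal ^ (1 / p) with hΓ
  have hΓm : Measurable Γ := hHm.ennreal_toReal.pow_const _
  have hΓ0 : ∀ x, 0 ≤ Γ x := fun x => Real.rpow_nonneg ENNReal.toReal_nonneg _
  have hdom : ∀ x y, h y ≤ H x → g y ≤ Γ x ∧ |f y| ≤ Γ x := by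
    intro x y hyx
    constructor
    · refine le_rpow_toReal (hg0 y) hp (hHt x) (le_trans ?_ hyx)
      rw [hh]; simp only [abs_of_nonneg (hg0 y)]
      exact le_add_self
    · refine le_rpow_toReal (abs_nonneg _) hp (hHt x) (le_trans ?_ hyx)
      exact le_self_add
  have hΓ1 : ∀ x ∈ Ω, g x ≤ Γ x ∧ |f x| ≤ Γ x := by
    intro x hx
    refine hdom x x ?_
    rw [hHdef, Hf, indicator_of_mem hx]
    exact le_self_add
  have hΓ2 : ∀ x, 0 < infDist x Ω → ∀ i ∈ actv Ω w (14 * c) x,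
      g (z i) ≤ Γ x ∧ |f (z i)| ≤ Γ x := by
    intro x _ i hi
    refine hdom x (z i) ?_
    rw [hHdef, Hf]
    refine le_trans ?_ le_add_self
    refine le_trans ?_ (ENNReal.le_tsum i)
    rw [indicator_of_mem (by exact hi)]
  have hΓp : ∀ x, ENNReal.ofReal (Γ x) ^ p = H x := by
    intro x
    rw [ENNReal.ofReal_rpow_of_nonneg (hΓ0 x) hp.le, hΓ]
    simp only
    rw [← Real.rpow_mul ENNReal.toReal_nonneg, one_div_mul_cancel hp.ne', Real.rpow_one,
      ENNReal.ofReal_toReal (hHt x)]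
  have hfg' : ∀ x ∈ Ω \ N, ∀ y ∈ Ω \ N, |f x - f y| ≤ dist x y * (g x + g y) := by
    intro x hx y hy
    rw [dist_eq_norm]; exact hfg x hx y hy
  have hsm : Measurable fun x : Eu n => infDist x Ω := (continuous_infDist_pt Ω).measurable
  have hbound : ∀ x, x ∉ N → x ∉ frontier Ω → infDist x Ω < δ → |Ft (7 * c) Ω w f z x| ≤ Γ x :=
    fun x => Ft_bound hc hne ho hcov hdisj f g Γ N z hzd hzΩ hΓ1 hΓ2 x
  have hnull : volume (N ∪ frontier Ω) = 0 := measure_union_null hN hfr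
  have hae : ∀ᵐ x : Eu n, x ∉ N ∪ frontier Ω := measure_eq_zero_iff_ae_notMem.1 hnull
  refine ⟨fun x => max 0 (1 - infDist x Ω / δ) * Ft (7 * c) Ω w f z x,
    fun x => if infDist x Ω < δ then C2 * Γ x else 0, ?_, ?_, ⟨?_, ?_, N ∪ frontier Ω, hnull, ?_⟩,
    ?_, ?_⟩
  · intro x hx
    simp [Ft, hx, infDist_zero_of_mem hx]
  · refine Measurable.mul ?_ ?_
    · exact measurable_const.max (measurable_const.sub (hsm.div_const _))
    · exact Measurable.ite ho.measurableSet hf (meas_Fext _ _)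
  · exact Measurable.ite (measurableSet_lt hsm measurable_const) (hΓm.const_mul _) measurable_const
  · intro x
    have := hΓ0 x
    dsimp only
    split_ifs
    · positivity
    · exact le_rfl
  · rintro x ⟨-, hx⟩ y ⟨-, hy⟩
    rw [mem_union, not_or] at hx hy
    rw [← dist_eq_norm]
    refine cutoff_est _ _ _ _ _ _ _ C1 δ hδ hC1p (hΓ0 x) (hΓ0 y) dist_nonneg infDist_nonneg
      infDist_nonneg ?_ ?_ (hbound x hx.1 hx.2) (hbound y hy.1 hy.2)
    · have h1 : infDist x Ω ≤ infDist y Ω + dist x y := infDist_le_infDist_add_dist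
      have h2 : infDist y Ω ≤ infDist x Ω + dist y x := infDist_le_infDist_add_dist
      rw [dist_comm y x] at h2
      rw [abs_le]; constructor <;> linarith
    · intro h1 h2
      exact Ft_hajlasz hc hne ho hcov hdisj f g Γ N z hzd hzΩ hfg' hΓ1 hΓ2 hΓ0 x y
        hx.1 hx.2 h1 hy.1 hy.2 h2
  · calc ∫⁻ x, ENNReal.ofReal |max 0 (1 - infDist x Ω / δ) * Ft (7 * c) Ω w f z x| ^ p
        ≤ ∫⁻ x, H x := by
          refine lintegral_mono_ae ?_
          filter_upwards [hae] with x hx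
          rw [mem_union, not_or] at hx
          rw [← hΓp x]
          gcongr
          by_cases hxδ : infDist x Ω < δ
          · have hb := hbound x hx.1 hx.2 hxδ
            rw [abs_mul, abs_of_nonneg (le_max_left _ _)]
            have : max 0 (1 - infDist x Ω / δ) ≤ 1 := by
              refine max_le zero_le_one ?_
              have := infDist_nonneg (x := x) (s := Ω)
              have : 0 ≤ infDist x Ω / δ := by positivity
              linarith
            calc _ ≤ 1 * Γ x := by gcongr
              _ = Γ x := one_mul _
          · have : 1 - infDist x Ω / δ ≤ 0 := by
              rw [sub_nonpos, one_le_div hδ]; exact not_lt.1 hxδ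
            rw [max_eq_left this]
            simpa using hΓ0 x
      _ ≤ K2 * ∫⁻ x in Ω, h x := hHint
      _ ≤ _ := by
          gcongr
          calc K2 = 1 * K2 := (one_mul _).symm
            _ ≤ _ := by gcongr; exact le_self_add
  · calc ∫⁻ x, ENNReal.ofReal |if infDist x Ω < δ then C2 * Γ x else 0| ^ p
        ≤ ∫⁻ x, ENNReal.ofReal C2 ^ p * H x := by
          refine lintegral_mono fun x => ?_
          rw [← hΓp x, ← ENNReal.mul_rpow_of_nonneg _ _ hp.le, ← ENNReal.ofReal_mul hC2p]
          have h0 : 0 ≤ C2 * Γ x := mul_nonneg hC2p (hΓ0 x)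
          gcongr
          split_ifs
          · rw [abs_of_nonneg h0]
          · simpa using h0
      _ = ENNReal.ofReal C2 ^ p * ∫⁻ x, H x := lintegral_const_mul _ hHm
      _ ≤ ENNReal.ofReal C2 ^ p * (K2 * ∫⁻ x in Ω, h x) := by gcongr
      _ ≤ _ := by
          rw [← mul_assoc]
          gcongr
          exact le_add_self

lemma enn_final (p : ℝ) (hp : 0 < p) (K a b X Y : ℝ≥0∞) (hX : X ≤ K * (a + b))
    (hY : Y ≤ K * (a + b)) :
    X ^ (1 / p) + Y ^ (1 / p) ≤
      (2 * (2 * K) ^ (1 / p)) * (a ^ (1 / p) + b ^ (1 / p)) := by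
  have hp' : 0 ≤ 1 / p := by positivity
  have key : ∀ Z, Z ≤ K * (a + b) → Z ^ (1 / p) ≤ (2 * K) ^ (1 / p) * (a ^ (1 / p) + b ^ (1 / p)) := by
    intro Z hZ
    have h1 : Z ≤ (2 * K) * max a b := by
      refine hZ.trans ?_
      calc K * (a + b) ≤ K * (max a b + max a b) := by
            gcongr
            · exact le_max_left _ _
            · exact le_max_right _ _
        _ = _ := by ring
    calc Z ^ (1 / p) ≤ ((2 * K) * max a b) ^ (1 / p) := by gcongr
      _ = (2 * K) ^ (1 / p) * (max a b) ^ (1 / p) := ENNReal.mul_rpow_of_nonneg _ _ hp'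
      _ ≤ _ := by
        gcongr
        rcases le_total a b with h | h
        · rw [max_eq_right h]; exact le_add_self
        · rw [max_eq_left h]; exact le_self_add
  calc _ ≤ _ := add_le_add (key X hX) (key Y hY)
    _ = _ := by ring

/-- **Proposition 3.7.** Bounded extension from a bounded `c`-uniform domain: every
`f ∈ M^{1,p}(Ω)` extends to `F ∈ M^{1,p}(ℝⁿ) (= H^{1,p}(ℝⁿ))` with norm control. -/
theorem extension_from_bounded_uniform_domain
    (n : ℕ) (hn : 1 ≤ n) (p : ℝ) (hp1 : (n : ℝ) / (n + 1) < p) (hp2 : p ≤ 1)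
    (c : ℝ) (hc : 1 ≤ c) (Ω : Set (EuclideanSpace ℝ (Fin n)))
    (hΩ : IsUniformDomain n c Ω) (hΩb : Bornology.IsBounded Ω) :
    ∃ C : ℝ, 0 < C ∧
      ∀ f : EuclideanSpace ℝ (Fin n) → ℝ,
        AEStronglyMeasurable f (volume.restrict Ω) →
        lpNorm n p f (volume.restrict Ω) ≠ ⊤ →
        ∀ g : EuclideanSpace ℝ (Fin n) → ℝ, IsHajlaszGradientOn n f g Ω →
          lpNorm n p g (volume.restrict Ω) ≠ ⊤ →
          ∃ F G : EuclideanSpace ℝ (Fin n) → ℝ,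
            (∀ᵐ x ∂(volume.restrict Ω), F x = f x) ∧
            AEStronglyMeasurable F volume ∧ lpNorm n p F volume ≠ ⊤ ∧
            IsHajlaszGradientOn n F G univ ∧
            lpNorm n p F volume + lpNorm n p G volume ≤
              ENNReal.ofReal C *
                (lpNorm n p f (volume.restrict Ω) + lpNorm n p g (volume.restrict Ω)) := by
  have hp : 0 < p := lt_of_le_of_lt (by positivity) hp1
  obtain ⟨K, hK, hcore⟩ := core n hn p hp c hc Ω hΩ hΩb
  have hΩm : MeasurableSet Ω := hΩ.1.measurableSet
  set C0 : ℝ≥0∞ := 2 * (2 * K) ^ (1 / p) with hC0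
  have hC0t : C0 ≠ ⊤ := ENNReal.mul_ne_top ENNReal.ofNat_ne_top
    (ENNReal.rpow_ne_top_of_nonneg (by positivity) (ENNReal.mul_ne_top ENNReal.ofNat_ne_top hK))
  refine ⟨C0.toReal + 1, by positivity, ?_⟩
  intro f hf hft g ⟨hgm, hg0, E, hE, hfg⟩ hgt
  have hfm : Measurable (hf.mk f) := hf.stronglyMeasurable_mk.measurable
  have hae := hf.ae_eq_mk
  have hae' := (ae_restrict_iff' hΩm).1 hae
  have hnull : volume {x | ¬ (x ∈ Ω → f x = hf.mk f x)} = 0 := ae_iff.1 hae'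
  obtain ⟨F, G, hF, hFm, hG, hFi, hGi⟩ := hcore (hf.mk f) g hfm hgm hg0
    (E ∪ {x | ¬ (x ∈ Ω → f x = hf.mk f x)}) (measure_union_null hE hnull) (by
      rintro x ⟨hx, hxE⟩ y ⟨hy, hyE⟩
      simp only [mem_union, mem_ofPred_eq, not_or, not_not] at hxE hyE
      rw [← hxE.2 hx, ← hyE.2 hy]
      exact hfg x ⟨hx, hxE.1⟩ y ⟨hy, hyE.1⟩)
  have hint : ∫⁻ x in Ω, (ENNReal.ofReal |hf.mk f x| ^ p + ENNReal.ofReal |g x| ^ p) =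
      (∫⁻ x in Ω, ENNReal.ofReal |f x| ^ p) + ∫⁻ x in Ω, ENNReal.ofReal |g x| ^ p := by
    rw [lintegral_add_right _ ((hgm.abs.ennreal_ofReal).pow_const p)]
    congr 1
    refine lintegral_congr_ae ?_
    filter_upwards [hae] with x hx
    rw [hx]
  rw [hint] at hFi hGi
  have hfin := enn_final p hp K _ _ _ _ hFi hGi
  have hmain : lpNorm n p F volume + lpNorm n p G volume ≤
      ENNReal.ofReal (C0.toReal + 1) *
        (lpNorm n p f (volume.restrict Ω) + lpNorm n p g (volume.restrict Ω)) := by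
    unfold _root_.lpNorm
    refine hfin.trans ?_
    gcongr
    calc C0 = ENNReal.ofReal C0.toReal := (ENNReal.ofReal_toReal hC0t).symm
      _ ≤ _ := ENNReal.ofReal_le_ofReal (by linarith)
  refine ⟨F, G, ?_, hFm.aestronglyMeasurable, ?_, hG, hmain⟩
  · filter_upwards [hae, ae_restrict_mem hΩm] with x hx hxΩ
    rw [hF x hxΩ, hx]
  · have : ENNReal.ofReal (C0.toReal + 1) *
        (lpNorm n p f (volume.restrict Ω) + lpNorm n p g (volume.restrict Ω)) ≠ ⊤ :=
      ENNReal.mul_ne_top ENNReal.ofReal_ne_top (ENNReal.add_ne_top.2 ⟨hft, hgt⟩)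
    exact ne_top_of_le_ne_top this (le_self_add.trans hmain)
end
end
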